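/- arXiv:1006.0788 — 4 statements merged into one kernel-verified Lean document; each statement's English description precedes it below -/
import Mathlib

section
/- (Theorem 6.4, half-turn symmetry in the plane.) Let G be a finite simple graph with |E| = 2|V| − 4, let S = {I, −I} ⊂ O(2) (the half-turn group about the origin), and let Φ : S → Aut(G) be a homomorphism such that Φ(−I) has no fixed vertex and fixes no edge setwise. Let (G,p) be an S-symmetric framework of type Φ in ℝ² whose points p_i affinely span ℝ² and which admits no nonzero fully (S,Φ)-symmetric self-stress (this last hypothesis playing the role of the paper's '(S,Φ)-generic' assumption, as licensed by Remark 6.2). Then (G,p) has a finite flex preserving the symmetry throughout the path. -/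
open scoped Classical

noncomputable section

abbrev Euc (d : ℕ) : Type := EuclideanSpace ℝ (Fin d)

/-- The subspace of points of `ℝ^d` fixed by a linear isometry (orthogonal transformation). -/
def fixedSpace {d : ℕ} (x : Euc d ≃ₗᵢ[ℝ] Euc d) : Submodule ℝ (Euc d) :=
  LinearMap.ker (x.toLinearEquiv.toLinearMap - LinearMap.id)

lemma half_aux {X : Type*} [Fintype X] [DecidableEq X] (τ : X → X) (h2 : ∀ x, τ (τ x) = x)
    (hf : ∀ x, τ x ≠ x) :
    ∃ (H : Finset X) (s : X → ℝ) (r : X → H),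
      (∀ x, r (τ x) = r x) ∧ (∀ x, s (τ x) = - s x) ∧ (∀ h : H, r h = h) ∧ (∀ h : H, s h = 1) ∧
      (∀ x, (x = r x ∧ s x = 1) ∨ (τ x = r x ∧ s x = -1)) ∧
      (∀ g : H → ℝ, ∑ x, g (r x) = 2 * ∑ h, g h) := by
  let lo : LinearOrder X := linearOrderOfSTO (WellOrderingRel (α := X))
  let H : Finset X := Finset.univ.filter (fun x => lo.lt x (τ x))
  have hH : ∀ x, x ∈ H ↔ lo.lt x (τ x) := by intro x; simp [H]
  have hn : ∀ x, x ∉ H ↔ τ x ∈ H := by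
    intro x
    rw [hH, hH, h2]
    have := hf x
    constructor
    · intro h
      exact lt_of_le_of_ne (not_lt.1 h) this
    · intro h
      exact not_lt.2 (le_of_lt h)
  let r : X → H := fun x => if h : x ∈ H then ⟨x, h⟩ else ⟨τ x, (hn x).1 h⟩
  let s : X → ℝ := fun x => if x ∈ H then 1 else -1
  have r1 : ∀ x (h : x ∈ H), r x = ⟨x, h⟩ := fun x h => by simp [r, h]
  have r2 : ∀ x (h : x ∉ H), r x = ⟨τ x, (hn x).1 h⟩ := fun x h => by simp [r, h]
  have hn' : ∀ x, x ∈ H → τ x ∉ H := by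
    intro x hx; rw [hn, h2]; exact hx
  refine ⟨H, s, r, ?_, ?_, ?_, ?_, ?_, ?_⟩
  · intro x
    by_cases h : x ∈ H
    · rw [r1 x h, r2 _ (hn' x h)]; simp [h2]
    · rw [r2 x h, r1 _ ((hn x).1 h)]
  · intro x
    by_cases h : x ∈ H
    · simp [s, h, hn' x h]
    · simp [s, h, (hn x).1 h]
  · intro h; simp [r1 h h.2]
  · intro h; simp [s]
  · intro x
    by_cases h : x ∈ H
    · left; rw [r1 x h]; simp [s, h]
    · right; rw [r2 x h]; simp [s, h]
  · intro g
    have hs : ∑ x ∈ H, g (r x) = ∑ h, g h := by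
      rw [← Finset.sum_coe_sort]
      refine Finset.sum_congr rfl fun h _ => ?_
      rw [r1 h h.2]
    have hc : ∑ x ∈ Hᶜ, g (r x) = ∑ x ∈ H, g (r x) := by
      refine Finset.sum_bij' (fun x _ => τ x) (fun x _ => τ x) ?_ ?_ ?_ ?_ ?_
      · intro x hx; exact (hn x).1 (by simpa using hx)
      · intro x hx; simpa using hn' x hx
      · intro x _; exact h2 x
      · intro x _; exact h2 x
      · intro x hx
        have h : x ∉ H := by simpa using hx
        rw [r2 x h, r1 _ ((hn x).1 h)]
    rw [← Finset.sum_add_sum_compl H, hc, hs]; ring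

lemma core_flex {X Y : Type*} [NormedAddCommGroup X] [NormedSpace ℝ X] [FiniteDimensional ℝ X]
    [NormedAddCommGroup Y] [NormedSpace ℝ Y] [FiniteDimensional ℝ Y]
    (f : X → Y) (f' : X →L[ℝ] Y) (x0 : X) (hf : HasStrictFDerivAt f f' x0)
    (hr : f'.range = ⊤) (g : X → ℝ) (g' : X →L[ℝ] ℝ) (hg : HasFDerivAt g g' x0)
    (u : X) (hu : f' u = 0) (hgu : g' u ≠ 0) :
    ∃ γ : ℝ → X, ContinuousOn γ (Set.Icc 0 1) ∧ γ 0 = x0 ∧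
      (∀ t ∈ Set.Icc (0:ℝ) 1, f (γ t) = f x0) ∧ ∀ t ∈ Set.Ioc (0:ℝ) 1, g (γ t) ≠ g x0 := by
  have : CompleteSpace X := FiniteDimensional.complete ℝ X
  have : CompleteSpace Y := FiniteDimensional.complete ℝ Y
  let I := hf.implicitFunction f f' hr
  have hI : HasStrictFDerivAt (I (f x0)) f'.ker.subtypeL 0 := hf.to_implicitFunction hr
  let U : f'.ker := ⟨u, hu⟩
  let c : ℝ → X := fun t => I (f x0) (t • U)
  have hlin : HasStrictFDerivAt (fun t : ℝ => t • U) (ContinuousLinearMap.toSpanSingleton ℝ U) 0 :=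
    (ContinuousLinearMap.toSpanSingleton ℝ U).hasStrictFDerivAt
  have hc : HasStrictFDerivAt c (f'.ker.subtypeL.comp (ContinuousLinearMap.toSpanSingleton ℝ U)) 0 := by
    refine HasStrictFDerivAt.comp (g := I (f x0)) 0 ?_ hlin
    simpa using hI
  have c0 : c 0 = x0 := by
    have := hf.eq_implicitFunction hr
    simp only [c, I, zero_smul]
    have h := this.self_of_nhds
    simpa using h
  have hcd : HasDerivAt c u 0 := by
    have := hc.hasFDerivAt.hasDerivAt
    simpa [U] using this
  have hgd : HasDerivAt (g ∘ c) (g' u) 0 := by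
    refine HasFDerivAt.comp_hasDerivAt 0 ?_ hcd
    rw [c0]; exact hg
  have ev1 : ∀ᶠ t in nhds (0:ℝ), f (c t) = f x0 := by
    have h := hf.map_implicitFunction_eq hr
    have hcont : Filter.Tendsto (fun t : ℝ => (f x0, t • U)) (nhds 0) (nhds (f x0, (0 : f'.ker))) := by
      have : Continuous (fun t : ℝ => (f x0, t • U)) := by fun_prop
      simpa using this.tendsto 0
    exact hcont.eventually h
  have ev2 : ∀ᶠ t in nhdsWithin (0:ℝ) {0}ᶜ, g (c t) ≠ g x0 := by
    have := hgd.eventually_ne (c := g x0) hgu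
    simpa using this
  obtain ⟨K, S, hS, hK⟩ := hc.exists_lipschitzOnWith
  have ev2' : ∀ᶠ t in nhds (0:ℝ), t ≠ 0 → g (c t) ≠ g x0 := by
    simpa using eventually_nhdsWithin_iff.1 ev2
  obtain ⟨ε, hε, hb⟩ := Metric.eventually_nhds_iff.1 (ev1.and (ev2'.and hS))
  have key : ∀ t ∈ Set.Icc (0:ℝ) 1, dist (ε / 2 * t) 0 < ε := by
    intro t ht
    rw [Real.dist_eq, sub_zero, abs_of_nonneg (by have := ht.1; positivity)]
    nlinarith [ht.1, ht.2]
  refine ⟨fun t => c (ε / 2 * t), ?_, by simp [c0], fun t ht => (hb (key t ht)).1, ?_⟩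
  · refine hK.continuousOn.comp (by fun_prop) fun t ht => (hb (key t ht)).2.2
  · intro t ht
    refine (hb (key t ⟨ht.1.le, ht.2⟩)).2.1 ?_
    have := ht.1
    positivity

/-- bilinear edge form -/
def edgeD {V : Type*} (p w : V → Euc 2) : Sym2 V → ℝ :=
  Sym2.lift ⟨fun i j => inner ℝ (p i - p j) (w i - w j), fun i j => by
    show inner ℝ (p i - p j) (w i - w j) = inner ℝ (p j - p i) (w j - w i)
    rw [← neg_sub (p j), ← neg_sub (w j), inner_neg_neg]⟩

lemma edgeD_mk {V : Type*} (p w : V → Euc 2) (i j : V) :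
    edgeD p w s(i, j) = inner ℝ (p i - p j) (w i - w j) := rfl

lemma stress_of_edgeD {V : Type*} [Fintype V] [DecidableEq V]
    (G : SimpleGraph V) [DecidableRel G.Adj] (p : V → Euc 2) (ω : Sym2 V → ℝ)
    (h : ∀ w : V → Euc 2, ∑ e ∈ G.edgeFinset, ω e * edgeD p w e = 0) (i : V) :
    ∑ j ∈ G.neighborFinset i, ω s(i, j) • (p i - p j) = 0 := by
  refine ext_inner_right ℝ fun x => ?_
  rw [inner_zero_left, sum_inner, ← h (Pi.single i x)]
  have himg : (G.neighborFinset i).image (fun j => s(i, j)) ⊆ G.edgeFinset := by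
    intro e he
    simp only [Finset.mem_image, SimpleGraph.mem_neighborFinset] at he
    obtain ⟨j, hj, rfl⟩ := he
    simpa using hj
  rw [← Finset.sum_subset himg, Finset.sum_image]
  · refine Finset.sum_congr rfl fun j hj => ?_
    have hne : j ≠ i := by
      rintro rfl
      simp at hj
    rw [edgeD_mk, inner_smul_left]
    simp [hne]
  · intro a _ b _ hab
    exact Sym2.congr_right.1 hab
  · intro e he hne
    induction e using Sym2.ind with
    | _ a b =>
      have hab : G.Adj a b := by simpa using he
      rw [edgeD_mk]
      have ha : a ≠ i := by
        rintro rfl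
        exact hne (Finset.mem_image.2 ⟨b, by simpa using hab, rfl⟩)
      have hb : b ≠ i := by
        rintro rfl
        exact hne (Finset.mem_image.2 ⟨a, by simpa using hab.symm, Sym2.eq_swap⟩)
      simp [ha, hb]

lemma exists_pair {V : Type*} (p : V → Euc 2) (hspan : affineSpan ℝ (Set.range p) = ⊤) :
    ∃ k l, ∀ x : Euc 2, inner ℝ (p k) x = 0 → inner ℝ (p l) x = 0 → x = 0 := by
  have hsp : Submodule.span ℝ (Set.range p) = ⊤ := by
    rw [eq_top_iff]
    intro x _
    have : x ∈ affineSpan ℝ (Set.range p) := by rw [hspan]; trivial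
    exact affineSpan_subset_span this
  have hk : ∃ k, p k ≠ 0 := by
    by_contra! hall
    have : Submodule.span ℝ (Set.range p) ≤ ⊥ := by
      rw [Submodule.span_le]; rintro _ ⟨i, rfl⟩; simp [hall i]
    rw [hsp] at this
    exact top_ne_bot (le_bot_iff.1 this)
  obtain ⟨k, hk⟩ := hk
  have hl : ∃ l, p l ∉ Submodule.span ℝ {p k} := by
    by_contra! hall
    have : Submodule.span ℝ (Set.range p) ≤ Submodule.span ℝ {p k} := by
      rw [Submodule.span_le]; rintro _ ⟨i, rfl⟩; exact hall i
    rw [hsp] at this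
    have h1 := Submodule.finrank_mono this
    rw [finrank_span_singleton hk, finrank_top] at h1
    simp at h1
  obtain ⟨l, hl⟩ := hl
  refine ⟨k, l, fun x h1 h2 => ?_⟩
  have hli : LinearIndependent ℝ ![p k, p l] := by
    rw [LinearIndependent.pair_iff' hk]
    intro a ha
    exact hl (Submodule.mem_span_singleton.2 ⟨a, ha⟩)
  have htop := hli.span_eq_top_of_card_eq_finrank (by simp)
  have hle : Submodule.span ℝ (Set.range ![p k, p l]) ≤ (Submodule.span ℝ {x})ᗮ := by
    rw [Submodule.span_le]
    rintro _ ⟨i, rfl⟩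
    rw [SetLike.mem_coe, Submodule.mem_orthogonal_singleton_iff_inner_left]
    fin_cases i
    · exact h1
    · exact h2
  rw [htop] at hle
  have := hle (Submodule.mem_top (x := x))
  rw [Submodule.mem_orthogonal_singleton_iff_inner_left] at this
  exact inner_self_eq_zero.1 this

/-- Theorem 6.4, half-turn symmetry in the plane:
`S = {I, -I} ⊂ O(2)`, `Φ(-I) = σ` has no fixed vertex and fixes no edge,
`|E| = 2|V| - 4`; then a symmetric framework `(G,p)` which spans the plane and
has no nonzero fully symmetric self-stress has a symmetry-preserving finite
flex. -/
theorem stmt_4 {V : Type*} [Fintype V] [DecidableEq V]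
    (G : SimpleGraph V) [DecidableRel G.Adj]
    (hcount : G.edgeFinset.card + 4 = 2 * Fintype.card V)
    (C : Euc 2 ≃ₗᵢ[ℝ] Euc 2) (hC : ∀ v, C v = -v)
    (σ : Equiv.Perm V) (hσ2 : σ * σ = 1)
    (hσadj : ∀ i j : V, G.Adj (σ i) (σ j) ↔ G.Adj i j)
    (hnofixv : ∀ i : V, σ i ≠ i)
    (hnofixe : ∀ e ∈ G.edgeSet, Sym2.map σ e ≠ e)
    (p : V → Euc 2) (hp : Function.Injective p)
    (hsym : ∀ i, C (p i) = p (σ i))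
    (hspan : affineSpan ℝ (Set.range p) = ⊤)
    (hnostress : ∀ ω : Sym2 V → ℝ,
      (∀ i : V, ∑ j ∈ G.neighborFinset i, ω s(i, j) • (p i - p j) = 0) →
      (∀ e ∈ G.edgeSet, ω (Sym2.map σ e) = ω e) →
      ∀ e ∈ G.edgeSet, ω e = 0) :
    ∃ P : ℝ → V → Euc 2,
      ContinuousOn P (Set.Icc 0 1) ∧
      P 0 = p ∧
      (∀ t ∈ Set.Icc (0:ℝ) 1, ∀ i j : V, G.Adj i j → ‖P t i - P t j‖ = ‖p i - p j‖) ∧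
      (∃ k l : V, ∀ t ∈ Set.Ioc (0:ℝ) 1, ‖P t k - P t l‖ ≠ ‖p k - p l‖) ∧
      (∀ t ∈ Set.Icc (0:ℝ) 1, ∀ i, C (P t i) = P t (σ i)) := by
  have σσ : ∀ i, σ (σ i) = i := fun i => by
    have := congrArg (fun f : Equiv.Perm V => f i) hσ2
    simpa using this
  have hpσ : ∀ i, p (σ i) = - p i := fun i => by rw [← hsym, hC]
  -- edge involution
  have hτmem : ∀ e ∈ G.edgeSet, Sym2.map σ e ∈ G.edgeSet := by
    intro e he
    induction e using Sym2.ind with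
    | _ a b => simpa [hσadj] using he
  let τ : G.edgeSet → G.edgeSet := fun e => ⟨Sym2.map σ e.1, hτmem e.1 e.2⟩
  have ττ : ∀ e, τ (τ e) = e := by
    rintro ⟨e, he⟩
    apply Subtype.ext
    induction e using Sym2.ind with
    | _ a b => simp [τ, σσ]
  have τne : ∀ e, τ e ≠ e := by
    intro e h
    exact hnofixe e.1 e.2 (congrArg Subtype.val h)
  obtain ⟨HV, s, r, rσ, sσ, rH, sH, hrs, hsumV⟩ := half_aux (fun i => σ i) σσ hnofixv
  obtain ⟨HE, sE, rE, rEτ, -, rEH, -, hrsE, hsumE⟩ := half_aux τ ττ τne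
  have cardV : Fintype.card V = 2 * HV.card := by
    have := hsumV (fun _ => 1)
    simp at this
    exact_mod_cast this
  have cardE : G.edgeFinset.card = 2 * HE.card := by
    have := hsumE (fun _ => 1)
    simp only [Finset.sum_const, Finset.card_univ, nsmul_eq_mul, mul_one, Fintype.card_coe] at this
    rw [SimpleGraph.edgeFinset_card]
    exact_mod_cast this
  -- the parametrization of symmetric configurations
  let L : (HV → Euc 2) →L[ℝ] (V → Euc 2) :=
    ContinuousLinearMap.pi fun i => s i • ContinuousLinearMap.proj (r i)
  have hL : ∀ q i, L q i = s i • q (r i) := fun q i => rfl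
  have hLσ : ∀ q i, L q (σ i) = - L q i := by
    intro q i
    rw [hL, hL, rσ, sσ, neg_smul]
  have hLsurj : ∀ v : V → Euc 2, (∀ i, v (σ i) = - v i) → L (fun h => v h) = v := by
    intro v hv
    funext i
    rw [hL]
    rcases hrs i with ⟨h1, h2⟩ | ⟨h1, h2⟩
    · rw [← h1, h2, one_smul]
    · rw [← h1, h2, hv]; simp
  have hLinj : ∀ q, L q = 0 → q = 0 := by
    intro q hq
    funext h
    have := congrFun hq h
    rw [hL, rH, sH, one_smul] at this
    exact this
  let x0 : HV → Euc 2 := fun h => p h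
  have hx0 : L x0 = p := hLsurj p hpσ
  -- edges endpoints
  have hab : ∀ e : G.edgeSet, ∃ ab : V × V, e.1 = s(ab.1, ab.2) := by
    rintro ⟨e, he⟩
    induction e using Sym2.ind with
    | _ a b => exact ⟨(a, b), rfl⟩
  choose ab hab using hab
  let ℓ : V → V → (HV → Euc 2) →L[ℝ] Euc 2 := fun i j =>
    (ContinuousLinearMap.proj i).comp L - (ContinuousLinearMap.proj j).comp L
  have hℓ : ∀ i j q, ℓ i j q = L q i - L q j := fun i j q => rfl
  let nd : V → V → (HV → Euc 2) →L[ℝ] ℝ := fun i j =>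
    (2:ℝ) • (innerSL ℝ (p i - p j)).comp (ℓ i j)
  have hnd : ∀ i j q, nd i j q = 2 * inner ℝ (p i - p j) (L q i - L q j) := fun i j q => rfl
  have hnderiv : ∀ i j, HasStrictFDerivAt (fun q => ‖ℓ i j q‖ ^ 2) (nd i j) x0 := by
    intro i j
    have h := (hasStrictFDerivAt_norm_sq (ℓ i j x0)).comp x0 ((ℓ i j).hasStrictFDerivAt (x := x0))
    have hd : nd i j = ((2:ℕ) • innerSL ℝ (ℓ i j x0)).comp (ℓ i j) := by
      ext1 q
      rw [hnd, hℓ, hx0]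
      simp [two_mul, hℓ, inner_sub_left]
    rw [hd]
    exact h
  let f : (HV → Euc 2) → (HE → ℝ) := fun q h => ‖ℓ (ab h).1 (ab h).2 q‖ ^ 2
  let f' : (HV → Euc 2) →L[ℝ] (HE → ℝ) := ContinuousLinearMap.pi fun h => nd (ab h).1 (ab h).2
  have hf : HasStrictFDerivAt f f' x0 := hasStrictFDerivAt_pi.2 fun h => hnderiv _ _
  have hf'e : ∀ q (h : HE), f' q h = 2 * edgeD p (L q) h.1.1 := by
    intro q h
    rw [hab h, edgeD_mk]
    exact hnd _ _ _
  have hDσ : ∀ (w : V → Euc 2) (e : Sym2 V),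
      edgeD p w (Sym2.map σ e) = - edgeD p (fun i => w (σ i)) e := by
    intro w e
    induction e using Sym2.ind with
    | _ a b =>
      rw [Sym2.map_mk, edgeD_mk, edgeD_mk, hpσ, hpσ, ← inner_neg_left]
      congr 1
      abel
  have hDneg : ∀ (w : V → Euc 2) (e : Sym2 V),
      edgeD p (fun i => - w i) e = - edgeD p w e := by
    intro w e
    induction e using Sym2.ind with
    | _ a b =>
      rw [edgeD_mk, edgeD_mk, ← inner_neg_right]
      congr 1
      abel
  have hDsub : ∀ (w w' : V → Euc 2) (e : Sym2 V),
      edgeD p (fun i => w i - w' i) e = edgeD p w e - edgeD p w' e := by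
    intro w w' e
    induction e using Sym2.ind with
    | _ a b =>
      rw [edgeD_mk, edgeD_mk, edgeD_mk, ← inner_sub_right]
      congr 1
      abel
  -- surjectivity
  have hsurj : f'.range = ⊤ := by
    by_contra hne
    obtain ⟨φ, hφ0, hφ⟩ := Submodule.exists_le_ker_of_lt_top _ (lt_top_iff_ne_top.2 hne)
    apply hφ0
    let c : HE → ℝ := fun h => φ (Pi.single h 1)
    have hφc : ∀ y, φ y = ∑ h, c h * y h := by
      intro y
      conv_lhs => rw [pi_eq_sum_univ' y]
      rw [map_sum]
      refine Finset.sum_congr rfl fun h _ => ?_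
      rw [map_smul, smul_eq_mul, mul_comm]
    let ω : Sym2 V → ℝ := fun e => if h : e ∈ G.edgeSet then c (rE ⟨e, h⟩) else 0
    have hω : ∀ e : G.edgeSet, ω e.1 = c (rE e) := fun e => by simp [ω]
    have hωτ : ∀ e : G.edgeSet, ω (τ e).1 = ω e.1 := fun e => by rw [hω, hω, rEτ]
    have hanti : ∀ v : V → Euc 2, (∀ i, v (σ i) = - v i) →
        ∑ e : G.edgeSet, ω e.1 * edgeD p v e.1 = 0 := by
      intro v hv
      have hDτ : ∀ e : G.edgeSet, edgeD p v (τ e).1 = edgeD p v e.1 := by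
        intro e
        show edgeD p v (Sym2.map σ e.1) = _
        rw [hDσ]
        have : (fun i => v (σ i)) = fun i => - v i := funext hv
        rw [this, hDneg, neg_neg]
      have hDr : ∀ e : G.edgeSet, edgeD p v e.1 = edgeD p v (rE e).1.1 := by
        intro e
        rcases hrsE e with ⟨h1, -⟩ | ⟨h1, -⟩
        · rw [← h1]
        · rw [← h1, hDτ]
      have h0 : φ (f' (fun h => v h)) = 0 := hφ ⟨_, rfl⟩
      rw [hφc] at h0
      have h1 := hsumE (fun h => c h * edgeD p v h.1.1)
      calc ∑ e : G.edgeSet, ω e.1 * edgeD p v e.1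
          = ∑ e : G.edgeSet, c (rE e) * edgeD p v (rE e).1.1 :=
            Finset.sum_congr rfl fun e _ => by rw [hω, ← hDr]
        _ = 2 * ∑ h, c h * edgeD p v h.1.1 := h1
        _ = ∑ h, c h * f' (fun h => v h) h := by
            rw [Finset.mul_sum]
            refine Finset.sum_congr rfl fun h _ => ?_
            rw [hf'e, hLsurj v hv]; ring
        _ = 0 := h0
    have hall : ∀ w : V → Euc 2, ∑ e : G.edgeSet, ω e.1 * edgeD p w e.1 = 0 := by
      intro w
      have h1 := hanti (fun i => w i - w (σ i)) (fun i => by rw [σσ]; abel)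
      have h2 : ∑ e : G.edgeSet, ω e.1 * edgeD p w e.1
          = ∑ e : G.edgeSet, - (ω e.1 * edgeD p (fun i => w (σ i)) e.1) := by
        rw [← Equiv.sum_comp (Function.Involutive.toPerm τ ττ)]
        refine Finset.sum_congr rfl fun e _ => ?_
        show ω (τ e).1 * edgeD p w (Sym2.map σ e.1) = _
        rw [hωτ, hDσ]; ring
      simp only [hDsub, mul_sub, Finset.sum_sub_distrib] at h1
      rw [Finset.sum_neg_distrib] at h2
      linarith
    have hz := hnostress ω (stress_of_edgeD G p ω fun w => by
      rw [← hall w]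
      exact Finset.sum_subtype _ (fun e => by simp) _) (fun e he => hωτ ⟨e, he⟩)
    ext h
    have h1 := hz h.1.1 h.1.2
    rw [hω, rEH] at h1
    simpa [c] using h1
  -- nontrivial kernel vector
  obtain ⟨u, hu, k, l, hkl⟩ : ∃ u, f' u = 0 ∧ ∃ k l, nd k l u ≠ 0 := by
    by_contra! hall
    obtain ⟨k, l, hkl⟩ := exists_pair p hspan
    have hself : ∀ u, f' u = 0 → ∀ i, inner ℝ (p i) (L u i) = 0 := by
      intro u hu i
      have h1 := hall u hu i (σ i)
      rw [hnd, hLσ, hpσ, sub_neg_eq_add, sub_neg_eq_add, ← two_smul ℝ, ← two_smul ℝ,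
        inner_smul_left, inner_smul_right] at h1
      simpa using h1
    have hskew : ∀ u, f' u = 0 → ∀ i j, inner ℝ (p i) (L u j) = - inner ℝ (p j) (L u i) := by
      intro u hu i j
      have h1 := hall u hu i j
      rw [hnd, inner_sub_left, inner_sub_right, inner_sub_right, hself u hu, hself u hu] at h1
      linarith
    let ψ : f'.ker →ₗ[ℝ] ℝ :=
      ((innerSL ℝ (p l)).comp ((ContinuousLinearMap.proj k).comp L)).toLinearMap.comp f'.ker.subtype
    have hψ : ∀ u : f'.ker, ψ u = inner ℝ (p l) (L u.1 k) := fun u => rfl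
    have hinj : Function.Injective ψ := by
      rw [injective_iff_map_eq_zero]
      rintro ⟨u, hu⟩ h0
      have hu : f' u = 0 := hu
      rw [hψ] at h0
      have h0 : inner ℝ (p l) (L u k) = 0 := h0
      have hk : L u k = 0 := hkl _ (hself u hu k) h0
      have hl : L u l = 0 := hkl _ (by rw [hskew u hu, h0, neg_zero]) (hself u hu l)
      apply Subtype.ext
      apply hLinj
      funext m
      exact hkl _ (by rw [hskew u hu, hk, inner_zero_right, neg_zero])
        (by rw [hskew u hu, hl, inner_zero_right, neg_zero])
    have h1 := LinearMap.finrank_le_finrank_of_injective hinj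
    have h2 := f'.toLinearMap.finrank_range_add_finrank_ker
    have h3 : Module.finrank ℝ f'.toLinearMap.range ≤ HE.card := by
      have := Submodule.finrank_le f'.toLinearMap.range
      simpa using this
    have h4 : Module.finrank ℝ (HV → Euc 2) = HV.card * 2 := by
      simp [Module.finrank_pi_fintype]
    have h1' : Module.finrank ℝ f'.toLinearMap.ker ≤ 1 := by simpa using h1
    omega
  obtain ⟨γ, γc, γ0, γf, γg⟩ := core_flex f f' x0 hf hsurj _ _ (hnderiv k l).hasFDerivAt u hu hkl
  refine ⟨fun t => L (γ t), L.continuous.comp_continuousOn γc, by show L (γ 0) = p; rw [γ0, hx0], ?_, ⟨k, l, ?_⟩, ?_⟩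
  · intro t ht i j hij
    have main : ∀ h : HE, edgeD (L (γ t)) (L (γ t)) h.1.1 = edgeD p p h.1.1 := by
      intro h
      have h1 := congrFun (γf t ht) h
      simp only [f, hℓ, hx0] at h1
      rw [hab h, edgeD_mk, edgeD_mk, real_inner_self_eq_norm_sq, real_inner_self_eq_norm_sq]
      exact h1
    have inv : ∀ (v : V → Euc 2), (∀ i, v (σ i) = - v i) → ∀ e : Sym2 V,
        edgeD v v (Sym2.map σ e) = edgeD v v e := by
      intro v hv e
      induction e using Sym2.ind with
      | _ a b =>
        rw [Sym2.map_mk, edgeD_mk, edgeD_mk, hv, hv, ← inner_neg_neg]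
        congr 1 <;> abel
    have hfin : edgeD (L (γ t)) (L (γ t)) s(i, j) = edgeD p p s(i, j) := by
      rcases hrsE ⟨s(i, j), hij⟩ with ⟨h1, -⟩ | ⟨h1, -⟩
      · have := main (rE ⟨s(i, j), hij⟩)
        rw [← h1] at this
        exact this
      · have := main (rE ⟨s(i, j), hij⟩)
        rw [← h1] at this
        simp only [τ] at this
        rw [inv _ (hLσ _), inv _ hpσ] at this
        exact this
    rw [edgeD_mk, edgeD_mk, real_inner_self_eq_norm_sq, real_inner_self_eq_norm_sq] at hfin
    exact (sq_eq_sq₀ (norm_nonneg _) (norm_nonneg _)).1 hfin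
  · intro t ht h
    apply γg t ht
    simp only [hℓ, hx0]
    rw [h]
  · intro t _ i
    show C (L (γ t) i) = L (γ t) (σ i)
    rw [hC, hLσ]
end
end

section
/- (Theorem 6.5, mirror symmetry in the plane.) Let G be a finite simple graph with |E| = 2|V| − 4, let s ∈ O(2) be a reflection (an orthogonal involution of ℝ² whose fixed subspace is 1-dimensional), S = {I, s}, and let Φ : S → Aut(G) be a homomorphism such that Φ(s) fixes no edge setwise. Let (G,p) be an S-symmetric framework of type Φ in ℝ² whose points p_i affinely span ℝ² and which admits no nonzero fully (S,Φ)-symmetric self-stress (this last hypothesis playing the role of the paper's '(S,Φ)-generic' assumption, as licensed by Remark 6.2). Then (G,p) has a finite flex preserving the symmetry throughout the path. -/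
open scoped Classical

noncomputable section

open Filter Topology in
theorem aux_path {E F : Type*} [NormedAddCommGroup E] [NormedSpace ℝ E] [CompleteSpace E]
    [NormedAddCommGroup F] [NormedSpace ℝ F] [FiniteDimensional ℝ F]
    (f : E → F) (f' : E →L[ℝ] F) (a : E) (hf : HasStrictFDerivAt f f' a)
    (hf' : f'.range = ⊤) (u : E) (hu : f' u = 0)
    (g : E → ℝ) (g' : E →L[ℝ] ℝ) (hg : HasFDerivAt g g' a) (hgu : g' u ≠ 0) :
    ∃ γ : ℝ → E, ContinuousOn γ (Set.Icc 0 1) ∧ γ 0 = a ∧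
      (∀ t ∈ Set.Icc (0:ℝ) 1, f (γ t) = f a) ∧
      (∀ t ∈ Set.Ioc (0:ℝ) 1, g (γ t) ≠ g a) := by
  let u' : f'.ker := ⟨u, hu⟩
  let Ψ := hf.implicitToOpenPartialHomeomorph f f' hf'
  let δ : ℝ → F × f'.ker := fun t => (f a, t • u')
  have hδ : Continuous δ := by fun_prop
  have hδ0 : δ 0 = (f a, 0) := by simp [δ]
  let γ : ℝ → E := fun t => hf.implicitFunction f f' hf' (f a) (t • u')
  have hγ0 : γ 0 = a := by simp [γ]
  have h1 : ∀ᶠ t in 𝓝 (0:ℝ), δ t ∈ Ψ.target := by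
    apply hδ.continuousAt.eventually
    rw [hδ0]
    exact Ψ.open_target.mem_nhds (hf.mem_implicitToOpenPartialHomeomorph_target hf')
  have h2 : ∀ᶠ t in 𝓝 (0:ℝ), f (γ t) = f a := by
    have := hf.map_implicitFunction_eq hf'
    rw [← hδ0] at this
    exact hδ.continuousAt.eventually this
  have hd : HasDerivAt γ u 0 := by
    have h3 := (hf.to_implicitFunction hf').hasFDerivAt
    have h4 : HasDerivAt (fun t : ℝ => t • u') u' 0 := by
      simpa using (hasDerivAt_id (0:ℝ)).smul_const u'
    have h5 : (0 : f'.ker) = (0:ℝ) • u' := by simp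
    rw [h5] at h3
    exact h3.comp_hasDerivAt (0:ℝ) h4
  have hgd : HasDerivAt (fun t => g (γ t)) (g' u) 0 := by
    rw [← hγ0] at hg
    exact hg.comp_hasDerivAt (0:ℝ) hd
  have h3 : ∀ᶠ t in 𝓝[≠] (0:ℝ), g (γ t) ≠ g a := hgd.eventually_ne hgu
  rw [eventually_nhdsWithin_iff] at h3
  obtain ⟨ε, hε, H⟩ := Metric.eventually_nhds_iff.1 (h1.and (h2.and h3))
  have key : ∀ t ∈ Set.Icc (0:ℝ) 1, dist (ε / 2 * t) 0 < ε := by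
    intro t ht
    rw [Real.dist_eq, sub_zero, abs_of_nonneg (by have := ht.1; positivity)]
    nlinarith [ht.1, ht.2]
  refine ⟨fun t => γ (ε / 2 * t), ?_, by simp [hγ0], fun t ht => (H (key t ht)).2.1, ?_⟩
  · have : ContinuousOn (fun t : ℝ => Ψ.symm (δ (ε / 2 * t))) (Set.Icc 0 1) := by
      refine Ψ.symm.continuousOn.comp (by fun_prop) ?_
      intro t ht
      exact (H (key t ht)).1
    exact this
  · intro t ht
    refine (H (key t ⟨ht.1.le, ht.2⟩)).2.2 ?_
    have := ht.1
    simp only [Set.mem_compl_iff, Set.mem_singleton_iff]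
    positivity

theorem aux_dart {V : Type*} [Fintype V] [DecidableEq V]
    (G : SimpleGraph V) [DecidableRel G.Adj] (h : Sym2 V → ℝ) :
    ∑ i, ∑ j ∈ G.neighborFinset i, h s(i, j) = 2 * ∑ e ∈ G.edgeFinset, h e := by
  have h1 : ∑ i, ∑ j ∈ G.neighborFinset i, h s(i, j) = ∑ d : G.Dart, h d.edge := by
    rw [Finset.sum_sigma']
    refine Finset.sum_bij' (fun x hx => (⟨(x.1, x.2), by simpa using hx⟩ : G.Dart))
      (fun d _ => ⟨d.fst, d.snd⟩) ?_ ?_ ?_ ?_ ?_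
    · simp
    · intro d _; simpa using d.adj
    · simp
    · simp
    · intro x hx; rfl
  rw [h1, Finset.mul_sum,
    ← Finset.sum_fiberwise_of_maps_to (s := Finset.univ) (t := G.edgeFinset)
      (g := fun d : G.Dart => d.edge) (by intro d _; simpa using d.edge_mem)]
  refine Finset.sum_congr rfl fun e he => ?_
  rw [Finset.sum_congr rfl (g := fun _ => h e) (by intro d hd; rw [(Finset.mem_filter.1 hd).2])]
  rw [Finset.sum_const, G.dart_edge_fiber_card e (by simpa using he)]
  simp

theorem aux_basis (C : Euc 2 ≃ₗᵢ[ℝ] Euc 2) (hC2 : ∀ v, C (C v) = v)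
    (hrefl : Module.finrank ℝ (fixedSpace C) = 1) :
    ∃ e₁ e₂ : Euc 2, C e₁ = e₁ ∧ C e₂ = -e₂ ∧ inner ℝ e₁ e₁ = (1:ℝ) ∧ inner ℝ e₂ e₂ = (1:ℝ) ∧
      inner ℝ e₁ e₂ = (0:ℝ) ∧ ∀ v : Euc 2, v = inner ℝ e₁ v • e₁ + inner ℝ e₂ v • e₂ := by
  have hm : ∀ v, v ∈ fixedSpace C ↔ C v = v := by
    intro v; simp [fixedSpace, sub_eq_zero]
  obtain ⟨v1, hv1, hv1'⟩ : ∃ v ∈ fixedSpace C, v ≠ 0 := by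
    apply Submodule.exists_mem_ne_zero_of_ne_bot
    intro h; rw [h] at hrefl; simp at hrefl
  obtain ⟨v2, hv2⟩ : ∃ v, C v ≠ v := by
    by_contra! h
    have : fixedSpace C = ⊤ := by
      rw [eq_top_iff]; intro v _; exact (hm v).2 (h v)
    rw [this] at hrefl; simp at hrefl
  rw [hm] at hv1
  have hw : v2 - C v2 ≠ 0 := sub_ne_zero.2 (Ne.symm hv2)
  set w := v2 - C v2 with hwdef
  have hCw : C w = -w := by simp [hwdef, hC2]
  let e₁ := (‖v1‖⁻¹ : ℝ) • v1
  let e₂ := (‖w‖⁻¹ : ℝ) • w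
  have h1 : C e₁ = e₁ := by simp [e₁, hv1]
  have h2 : C e₂ = -e₂ := by simp [e₂, hCw]
  have n1 : ‖e₁‖ = 1 := by simp [e₁, norm_smul, hv1']
  have n2 : ‖e₂‖ = 1 := by simp [e₂, norm_smul, hw]
  have h12 : inner ℝ e₁ e₂ = (0:ℝ) := by
    have := C.inner_map_map e₁ e₂
    rw [h1, h2, inner_neg_right] at this
    linarith
  have ho : Orthonormal ℝ ![e₁, e₂] := by
    rw [orthonormal_vecCons_iff]
    refine ⟨n1, ?_, ?_⟩
    · intro i; simpa using h12
    · rw [orthonormal_vecCons_iff]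
      refine ⟨n2, fun i => i.elim0, by simp [orthonormal_iff_ite]⟩
  have hcard : Fintype.card (Fin 2) = Module.finrank ℝ (Euc 2) := by simp
  let b := OrthonormalBasis.mk ho (by
    rw [ho.linearIndependent.span_eq_top_of_card_eq_finrank hcard])
  refine ⟨e₁, e₂, h1, h2, by rw [real_inner_self_eq_norm_sq, n1]; simp,
    by rw [real_inner_self_eq_norm_sq, n2]; simp, h12, ?_⟩
  intro v
  have := b.sum_repr' v
  rw [Fin.sum_univ_two] at this
  simpa [b] using this.symm

/-- The bilinear edge form. -/
def edgeB {V : Type*} (x y : V → Euc 2) : Sym2 V → ℝ :=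
  Sym2.lift ⟨fun i j => inner ℝ (x i - x j) (y i - y j), fun i j => by
    change inner ℝ (x i - x j) (y i - y j) = inner ℝ (x j - x i) (y j - y i)
    rw [← neg_sub (x j) (x i), ← neg_sub (y j) (y i), inner_neg_neg]⟩

theorem edgeB_mk {V : Type*} (x y : V → Euc 2) (i j : V) :
    edgeB x y s(i, j) = inner ℝ (x i - x j) (y i - y j) := rfl

theorem edgeB_map {V : Type*} (C : Euc 2 ≃ₗᵢ[ℝ] Euc 2) (σ : Equiv.Perm V) (x y : V → Euc 2)
    (hx : ∀ i, C (x i) = x (σ i)) (hy : ∀ i, C (y i) = y (σ i)) (e : Sym2 V) :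
    edgeB x y (Sym2.map σ e) = edgeB x y e := by
  induction e using Sym2.ind with
  | _ i j =>
    rw [Sym2.map_mk, edgeB_mk, edgeB_mk, ← hx, ← hx, ← hy, ← hy, ← map_sub, ← map_sub,
      C.inner_map_map]

/-- The edge form as a linear functional of the second argument. -/
def edgeL {V : Type*} [Fintype V] (x : V → Euc 2) (e : Sym2 V) : (V → Euc 2) →L[ℝ] ℝ :=
  LinearMap.toContinuousLinearMap
    { toFun := fun y => edgeB x y e
      map_add' := by
        intro y z
        induction e using Sym2.ind with
        | _ i j =>
          simp only [edgeB_mk, Pi.add_apply]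
          rw [← inner_add_right]; congr 1; abel
      map_smul' := by
        intro c y
        induction e using Sym2.ind with
        | _ i j =>
          simp only [edgeB_mk, Pi.smul_apply, RingHom.id_apply, smul_eq_mul]
          rw [← smul_sub, inner_smul_right] }

theorem edgeL_apply {V : Type*} [Fintype V] (x y : V → Euc 2) (e : Sym2 V) :
    edgeL x e y = edgeB x y e := rfl

theorem edgeB_deriv {V : Type*} [Fintype V] (x : V → Euc 2) (e : Sym2 V) :
    HasStrictFDerivAt (fun y => edgeB y y e) ((2:ℝ) • edgeL x e) x := by
  induction e using Sym2.ind with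
  | _ i j =>
    have h1 : HasStrictFDerivAt (fun y : V → Euc 2 => y i - y j)
        (ContinuousLinearMap.proj (R := ℝ) (φ := fun _ : V => Euc 2) i
          - ContinuousLinearMap.proj (R := ℝ) (φ := fun _ : V => Euc 2) j) x :=
      (ContinuousLinearMap.proj (R := ℝ) (φ := fun _ : V => Euc 2) i
          - ContinuousLinearMap.proj (R := ℝ) (φ := fun _ : V => Euc 2) j).hasStrictFDerivAt
    have h2 := h1.inner ℝ h1
    refine h2.congr_fderiv ?_
    ext y
    simp [edgeL_apply, edgeB_mk, real_inner_comm, two_mul]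

/-- Parametrisation of symmetric configurations. -/
def symQ {V : Type*} [Fintype V] (σ : Equiv.Perm V) (e₁ e₂ : Euc 2) :
    (V → ℝ) →L[ℝ] (V → Euc 2) :=
  LinearMap.toContinuousLinearMap
    { toFun := fun c i => (c i + c (σ i)) • e₁ + (c i - c (σ i)) • e₂
      map_add' := by intro c d; ext1 i; simp only [Pi.add_apply]; module
      map_smul' := by
        intro r c; ext1 i; simp only [Pi.smul_apply, smul_eq_mul, RingHom.id_apply]; module }

theorem symQ_apply {V : Type*} [Fintype V] (σ : Equiv.Perm V) (e₁ e₂ : Euc 2) (c : V → ℝ) (i : V) :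
    symQ σ e₁ e₂ c i = (c i + c (σ i)) • e₁ + (c i - c (σ i)) • e₂ := rfl

theorem aux_stress {V : Type*} [Fintype V] [DecidableEq V]
    (G : SimpleGraph V) [DecidableRel G.Adj]
    (C : Euc 2 ≃ₗᵢ[ℝ] Euc 2)
    (σ : Equiv.Perm V) (hσ2 : ∀ i, σ (σ i) = i)
    (hσadj : ∀ i j : V, G.Adj (σ i) (σ j) ↔ G.Adj i j)
    (p : V → Euc 2)
    (hsym : ∀ i, C (p i) = p (σ i))
    (ω : Sym2 V → ℝ) (hω : ∀ e, ω (Sym2.map σ e) = ω e)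
    (horth : ∀ y : V → Euc 2, (∀ i, C (y i) = y (σ i)) →
      ∑ e ∈ G.edgeFinset, ω e * edgeB p y e = 0) :
    ∀ i : V, ∑ j ∈ G.neighborFinset i, ω s(i, j) • (p i - p j) = 0 := by
  let g : V → Euc 2 := fun i => ∑ j ∈ G.neighborFinset i, ω s(i, j) • (p i - p j)
  have hg : ∀ i, C (g i) = g (σ i) := by
    intro i
    simp only [g, map_sum, map_smul, map_sub, hsym]
    refine Finset.sum_bij' (fun j _ => σ j) (fun j _ => σ j) ?_ ?_ ?_ ?_ ?_
    · intro j hj; simpa [hσadj] using hj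
    · intro j hj
      have := (hσadj (σ i) j).2 (by simpa using hj)
      simpa [hσ2] using this
    · intro j _; exact hσ2 j
    · intro j _; exact hσ2 j
    · intro j _
      have := hω s(i, j)
      rw [Sym2.map_mk] at this
      rw [this]
  have h0 := horth g hg
  have h1 := aux_dart G (fun e => ω e * edgeB p g e)
  rw [h0, mul_zero] at h1
  have h2 : ∑ i, ∑ j ∈ G.neighborFinset i, ω s(i, j) * edgeB p g s(i, j)
      = ∑ i, ∑ j ∈ G.neighborFinset i, ω s(i, j) * inner ℝ (p i - p j) (g i)
        - ∑ i, ∑ j ∈ G.neighborFinset i, ω s(i, j) * inner ℝ (p i - p j) (g j) := by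
    simp only [edgeB_mk, inner_sub_right, mul_sub, Finset.sum_sub_distrib]
  have h3 : ∑ i, ∑ j ∈ G.neighborFinset i, ω s(i, j) * inner ℝ (p i - p j) (g j)
      = - ∑ i, ∑ j ∈ G.neighborFinset i, ω s(i, j) * inner ℝ (p i - p j) (g i) := by
    rw [Finset.sum_comm' (t' := Finset.univ) (s' := fun j => G.neighborFinset j)
      (by intro x y; simp [G.adj_comm])]
    rw [← Finset.sum_neg_distrib]
    refine Finset.sum_congr rfl fun i _ => ?_
    rw [← Finset.sum_neg_distrib]
    refine Finset.sum_congr rfl fun j _ => ?_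
    rw [← neg_sub (p i), inner_neg_left, Sym2.eq_swap]
    ring
  have h4 : ∑ i, ∑ j ∈ G.neighborFinset i, ω s(i, j) * inner ℝ (p i - p j) (g i)
      = ∑ i, inner ℝ (g i) (g i) := by
    refine Finset.sum_congr rfl fun i _ => ?_
    conv_rhs => arg 2; simp only [g]
    rw [sum_inner]
    simp only [inner_smul_left]
    rfl
  have h5 : ∑ i, inner ℝ (g i) (g i) = (0:ℝ) := by
    rw [h1, h3, h4] at h2; linarith
  rw [Finset.sum_eq_zero_iff_of_nonneg (fun i _ => real_inner_self_nonneg)] at h5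
  intro i
  exact inner_self_eq_zero.1 (h5 i (Finset.mem_univ i))

/-- Theorem 6.5, mirror symmetry in the plane: `s ∈ O(2)` a
reflection (orthogonal involution with 1-dimensional fixed subspace),
`S = {I, s}`, `Φ(s) = σ` fixes no edge setwise, `|E| = 2|V| - 4`; then a
symmetric framework spanning the plane with no nonzero fully symmetric
self-stress has a symmetry-preserving finite flex. -/
theorem stmt_5 {V : Type*} [Fintype V] [DecidableEq V]
    (G : SimpleGraph V) [DecidableRel G.Adj]
    (hcount : G.edgeFinset.card + 4 = 2 * Fintype.card V)
    (C : Euc 2 ≃ₗᵢ[ℝ] Euc 2) (hC2 : ∀ v, C (C v) = v)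
    (hrefl : Module.finrank ℝ (fixedSpace C) = 1)
    (σ : Equiv.Perm V) (hσ2 : σ * σ = 1)
    (hσadj : ∀ i j : V, G.Adj (σ i) (σ j) ↔ G.Adj i j)
    (hnofixe : ∀ e ∈ G.edgeSet, Sym2.map σ e ≠ e)
    (p : V → Euc 2) (hp : Function.Injective p)
    (hsym : ∀ i, C (p i) = p (σ i))
    (hspan : affineSpan ℝ (Set.range p) = ⊤)
    (hnostress : ∀ ω : Sym2 V → ℝ,
      (∀ i : V, ∑ j ∈ G.neighborFinset i, ω s(i, j) • (p i - p j) = 0) →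
      (∀ e ∈ G.edgeSet, ω (Sym2.map σ e) = ω e) →
      ∀ e ∈ G.edgeSet, ω e = 0) :
    ∃ P : ℝ → V → Euc 2,
      ContinuousOn P (Set.Icc 0 1) ∧
      P 0 = p ∧
      (∀ t ∈ Set.Icc (0:ℝ) 1, ∀ i j : V, G.Adj i j → ‖P t i - P t j‖ = ‖p i - p j‖) ∧
      (∃ k l : V, ∀ t ∈ Set.Ioc (0:ℝ) 1, ‖P t k - P t l‖ ≠ ‖p k - p l‖) ∧
      (∀ t ∈ Set.Icc (0:ℝ) 1, ∀ i, C (P t i) = P t (σ i)) := by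
  obtain ⟨e₁, e₂, hCe1, hCe2, n1, n2, n12, hexp⟩ := aux_basis C hC2 hrefl
  have n21 : inner ℝ e₂ e₁ = (0:ℝ) := by rw [real_inner_comm]; exact n12
  have hσσ : ∀ i, σ (σ i) = i := fun i => by
    have := congrArg (fun τ : Equiv.Perm V => τ i) hσ2
    simpa using this
  have hmm : ∀ e : Sym2 V, Sym2.map σ (Sym2.map σ e) = e := by
    intro e
    induction e using Sym2.ind with
    | _ i j => simp [Sym2.map_mk, hσσ]
  have hmE : ∀ e, Sym2.map σ e ∈ G.edgeFinset ↔ e ∈ G.edgeFinset := by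
    intro e
    induction e using Sym2.ind with
    | _ i j => simp [Sym2.map_mk, hσadj]
  set Q := symQ σ e₁ e₂ with hQ
  have hQ1 : ∀ c i, inner ℝ e₁ (Q c i) = c i + c (σ i) := by
    intro c i; rw [hQ, symQ_apply]; simp only [inner_add_right, inner_smul_right, n1, n12]; ring
  have hQ2 : ∀ c i, inner ℝ e₂ (Q c i) = c i - c (σ i) := by
    intro c i; rw [hQ, symQ_apply]; simp only [inner_add_right, inner_smul_right, n2, n21]; ring
  have hQsym : ∀ c i, C (Q c i) = Q c (σ i) := by
    intro c i
    rw [hQ, symQ_apply, symQ_apply, map_add, map_smul, map_smul, hCe1, hCe2, hσσ]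
    module
  have hi1 : ∀ y : V → Euc 2, (∀ i, C (y i) = y (σ i)) →
      ∀ i, (inner ℝ e₁ (y (σ i)) : ℝ) = inner ℝ e₁ (y i) := by
    intro y hy i
    rw [← hy, ← C.inner_map_map e₁ (y i), hCe1]
  have hi2 : ∀ y : V → Euc 2, (∀ i, C (y i) = y (σ i)) →
      ∀ i, (inner ℝ e₂ (y (σ i)) : ℝ) = - inner ℝ e₂ (y i) := by
    intro y hy i
    rw [← hy, ← C.inner_map_map e₂ (y i), hCe2, inner_neg_left, neg_neg]
  have hQsurj : ∀ y : V → Euc 2, (∀ i, C (y i) = y (σ i)) → ∃ c, Q c = y := by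
    intro y hy
    refine ⟨fun i => (inner ℝ e₁ (y i) + inner ℝ e₂ (y i)) / 2, ?_⟩
    ext1 i
    rw [hexp (y i), hQ, symQ_apply]
    simp only [hi1 y hy, hi2 y hy]
    congr 2 <;> ring
  have hinner : ∀ x y : Euc 2, (inner ℝ x y : ℝ)
      = inner ℝ e₁ x * inner ℝ e₁ y + inner ℝ e₂ x * inner ℝ e₂ y := by
    intro x y
    conv_lhs => rw [hexp x]
    rw [inner_add_left, inner_smul_left, inner_smul_left]
    rfl
  obtain ⟨c₀, hc₀⟩ := hQsurj p hsym
  -- orbit representatives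
  let r : Sym2 V → ℕ := fun e => (Fintype.equivFin (Sym2 V) e : ℕ)
  have hr : Function.Injective r := fun a b h =>
    (Fintype.equivFin (Sym2 V)).injective (Fin.ext h)
  let D : Finset (Sym2 V) := G.edgeFinset.filter (fun e => r e < r (Sym2.map σ e))
  have hDE : ∀ e ∈ D, e ∈ G.edgeFinset := fun e he => (Finset.mem_filter.1 he).1
  have hDn : ∀ e ∈ D, Sym2.map σ e ∉ D := by
    intro e he he'
    have h1 := (Finset.mem_filter.1 he).2
    have h2 := (Finset.mem_filter.1 he').2
    rw [hmm] at h2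
    omega
  have hDc : ∀ e ∈ G.edgeFinset, e ∈ D ∨ Sym2.map σ e ∈ D := by
    intro e he
    have hne := hnofixe e (by simpa using he)
    rcases lt_trichotomy (r e) (r (Sym2.map σ e)) with h | h | h
    · exact Or.inl (Finset.mem_filter.2 ⟨he, h⟩)
    · exact absurd (hr h).symm hne
    · exact Or.inr (Finset.mem_filter.2 ⟨(hmE e).2 he, by rwa [hmm]⟩)
  have hDcard : 2 * D.card ≤ G.edgeFinset.card := by
    have hinj : Function.Injective (Sym2.map σ) := Function.LeftInverse.injective hmm
    have hdisj : Disjoint D (D.image (Sym2.map σ)) := by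
      rw [Finset.disjoint_left]
      intro e he he'
      obtain ⟨e', h1, rfl⟩ := Finset.mem_image.1 he'
      exact hDn e' h1 he
    have hsub : D ∪ D.image (Sym2.map σ) ⊆ G.edgeFinset := by
      intro e he
      rcases Finset.mem_union.1 he with h | h
      · exact hDE e h
      · obtain ⟨e', h1, rfl⟩ := Finset.mem_image.1 h
        exact (hmE e').2 (hDE e' h1)
    have := Finset.card_le_card hsub
    rw [Finset.card_union_of_disjoint hdisj, Finset.card_image_of_injective _ hinj] at this
    omega
  -- the measurement map
  let f : (V → ℝ) → (D → ℝ) := fun c e => edgeB (Q c) (Q c) e.1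
  let f' : (V → ℝ) →L[ℝ] (D → ℝ) :=
    ContinuousLinearMap.pi fun e : D => ((2:ℝ) • edgeL p e.1).comp Q
  have hder : ∀ e : Sym2 V, HasStrictFDerivAt (fun c => edgeB (Q c) (Q c) e)
      (((2:ℝ) • edgeL p e).comp Q) c₀ := by
    intro e
    have h1 := edgeB_deriv p e
    rw [← hc₀] at h1 ⊢
    exact h1.comp c₀ Q.hasStrictFDerivAt
  have hf : HasStrictFDerivAt f f' c₀ := hasStrictFDerivAt_pi.2 fun e => hder e.1
  have hf'app : ∀ c (e : D), f' c e = 2 * edgeB p (Q c) e.1 := fun c e => rfl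
  have hf'surj : f'.range = ⊤ := by
    by_contra hne
    obtain ⟨ℓ, hℓ, hle⟩ := Submodule.exists_le_ker_of_lt_top _ (lt_top_iff_ne_top.2 hne)
    apply hℓ
    let w : D → ℝ := fun e => ℓ (Pi.single e 1)
    have hℓw : ∀ x, ℓ x = ∑ e, x e * w e := by
      intro x
      rw [LinearMap.pi_apply_eq_sum_univ]
      refine Finset.sum_congr rfl fun e _ => ?_
      rw [smul_eq_mul]
      congr 2
      ext e'
      simp [Pi.single_apply, eq_comm]
    let W : Sym2 V → ℝ := fun e => if h : e ∈ D then w ⟨e, h⟩ else 0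
    let ω : Sym2 V → ℝ := fun e => W e + W (Sym2.map σ e)
    have hω : ∀ e, ω (Sym2.map σ e) = ω e := by
      intro e; simp only [ω, hmm]; ring
    have hst := aux_stress G C σ hσσ hσadj p hsym ω hω (by
      intro y hy
      obtain ⟨c, rfl⟩ := hQsurj y hy
      have h1 : ∑ e ∈ G.edgeFinset, W (Sym2.map σ e) * edgeB p (Q c) e
          = ∑ e ∈ G.edgeFinset, W e * edgeB p (Q c) e := by
        refine Finset.sum_bij' (fun e _ => Sym2.map σ e) (fun e _ => Sym2.map σ e) ?_ ?_ ?_ ?_ ?_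
        · intro e he; exact (hmE e).2 he
        · intro e he; exact (hmE e).2 he
        · intro e _; exact hmm e
        · intro e _; exact hmm e
        · intro e _
          rw [edgeB_map C σ p (Q c) hsym (hQsym c)]
      have h2 : ∑ e ∈ G.edgeFinset, W e * edgeB p (Q c) e
          = ∑ e : D, w e * edgeB p (Q c) e.1 := by
        rw [← Finset.sum_subset (s₁ := D) hDE (by
          intro e _ he; simp [W, he]), ← Finset.sum_coe_sort D]
        refine Finset.sum_congr rfl fun e _ => ?_
        simp [W]
      have h3 : ℓ (f' c) = 0 := hle ⟨c, rfl⟩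
      rw [hℓw] at h3
      simp only [hf'app] at h3
      have h4 : 2 * ∑ e : D, w e * edgeB p (Q c) e.1 = 0 := by
        rw [← h3, Finset.mul_sum]
        exact Finset.sum_congr rfl fun e _ => by ring
      simp only [ω, add_mul, Finset.sum_add_distrib]
      rw [h1, h2]; linarith)
    have hz := hnostress ω (by convert hst) (fun e _ => hω e)
    have hw : ∀ e, w e = 0 := by
      intro e
      have h1 := hz e.1 (by simpa using hDE e.1 e.2)
      have h2 := hDn e.1 e.2
      simpa [ω, W, h2] using h1
    ext x
    simp [hw, w] 
  -- not all first coordinates agree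
  have hspan' : ∃ k l, (inner ℝ e₁ (p k) : ℝ) ≠ inner ℝ e₁ (p l) := by
    by_contra! hall
    have h1 : vectorSpan ℝ (Set.range p) = ⊤ := by
      rw [← direction_affineSpan, hspan, AffineSubspace.direction_top]
    have h2 : vectorSpan ℝ (Set.range p) ≤ LinearMap.ker (innerSL ℝ e₁).toLinearMap := by
      rw [vectorSpan_def, Submodule.span_le]
      rintro _ ⟨_, ⟨k, rfl⟩, _, ⟨l, rfl⟩, rfl⟩
      simp [inner_sub_right, hall k l]
    have h3 : e₁ ∈ LinearMap.ker (innerSL ℝ e₁).toLinearMap := h2 (h1 ▸ Submodule.mem_top)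
    have h4 : (inner ℝ e₁ e₁ : ℝ) = 0 := h3
    rw [n1] at h4
    exact one_ne_zero h4
  obtain ⟨k₀, l₀, hkl⟩ := hspan'
  -- the infinitesimal flex
  obtain ⟨u, hu0, hu1, huk⟩ : ∃ u : V → ℝ, u ≠ 0 ∧ f' u = 0 ∧ u k₀ + u (σ k₀) = 0 := by
    let L : (V → ℝ) →ₗ[ℝ] ((D → ℝ) × ℝ) := f'.toLinearMap.prod
      (LinearMap.proj (R := ℝ) (φ := fun _ : V => ℝ) k₀
        + LinearMap.proj (R := ℝ) (φ := fun _ : V => ℝ) (σ k₀))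
    have hL : LinearMap.ker L ≠ ⊥ := by
      apply LinearMap.ker_ne_bot_of_finrank_lt
      simp
      omega
    obtain ⟨u, hu, hu0⟩ := Submodule.exists_mem_ne_zero_of_ne_bot hL
    have : L u = 0 := hu
    exact ⟨u, hu0, congrArg Prod.fst this, congrArg Prod.snd this⟩
  obtain ⟨k, l, hne⟩ : ∃ k l, edgeB p (Q u) s(k, l) ≠ 0 := by
    by_contra! hall
    apply hu0
    have hβ : ∀ i, (inner ℝ e₂ (Q u i) : ℝ) = 0 := by
      intro i
      have h1 := hi2 (Q u) (hQsym u) i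
      by_cases hi : σ i = i
      · rw [hi] at h1; linarith
      · have h2 := hall i (σ i)
        rw [edgeB_mk, hinner] at h2
        simp only [inner_sub_right, hi1 (Q u) (hQsym u), hi2 (Q u) (hQsym u), hi1 p hsym,
          hi2 p hsym] at h2
        have h3 : (inner ℝ e₂ (p i) : ℝ) * inner ℝ e₂ (Q u i) = 0 := by linarith
        rcases mul_eq_zero.1 h3 with h | h
        · exfalso
          apply hi
          apply hp
          rw [hexp (p i), hexp (p (σ i)), hi1 p hsym, hi2 p hsym, h, neg_zero]
        · exact h
    have hα : ∀ i j, (inner ℝ e₁ (p i) : ℝ) ≠ inner ℝ e₁ (p j) →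
        (inner ℝ e₁ (Q u i) : ℝ) = inner ℝ e₁ (Q u j) := by
      intro i j hij
      have h2 := hall i j
      rw [edgeB_mk, hinner] at h2
      simp only [inner_sub_right, hβ, sub_zero, mul_zero, add_zero] at h2
      rcases mul_eq_zero.1 h2 with h | h
      · exact absurd (sub_eq_zero.1 h) hij
      · exact sub_eq_zero.1 h
    have hα0 : ∀ i, (inner ℝ e₁ (Q u i) : ℝ) = 0 := by
      intro i
      have hk : (inner ℝ e₁ (Q u k₀) : ℝ) = 0 := by rw [hQ1, huk]
      by_cases h : (inner ℝ e₁ (p i) : ℝ) = inner ℝ e₁ (p k₀)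
      · rw [hα i l₀ (by rw [h]; exact hkl), ← hα k₀ l₀ hkl, hk]
      · rw [hα i k₀ h, hk]
    ext i
    have h1 := hα0 i
    have h2 := hβ i
    rw [hQ1] at h1
    rw [hQ2] at h2
    simp only [Pi.zero_apply]
    linarith
  obtain ⟨γ, hγc, hγ0, hγf, hγg⟩ := aux_path f f' c₀ hf hf'surj u hu1
    (fun c => edgeB (Q c) (Q c) s(k, l)) _ (hder s(k, l)).hasFDerivAt
    (by
      change 2 * edgeB p (Q u) s(k, l) ≠ 0
      exact mul_ne_zero two_ne_zero hne)
  have hBn : ∀ (q : V → Euc 2) i j, edgeB q q s(i, j) = ‖q i - q j‖ ^ 2 := by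
    intro q i j
    rw [edgeB_mk, real_inner_self_eq_norm_sq]
  refine ⟨fun t => Q (γ t), Q.continuous.comp_continuousOn hγc, by simp only [hγ0, hc₀], ?_,
    ⟨k, l, ?_⟩, fun t _ i => hQsym _ i⟩
  · intro t ht i j hij
    have hD : ∀ e ∈ D, edgeB (Q (γ t)) (Q (γ t)) e = edgeB p p e := by
      intro e he
      have := congrFun (hγf t ht) ⟨e, he⟩
      simp only [f, hc₀] at this
      exact this
    have hE : edgeB (Q (γ t)) (Q (γ t)) s(i, j) = edgeB p p s(i, j) := by
      rcases hDc s(i, j) (by simpa using hij) with h | h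
      · exact hD _ h
      · have := hD _ h
        rwa [edgeB_map C σ _ _ (hQsym _) (hQsym _), edgeB_map C σ _ _ hsym hsym] at this
    rw [hBn, hBn] at hE
    exact (sq_eq_sq₀ (norm_nonneg _) (norm_nonneg _)).1 hE
  · intro t ht h
    apply hγg t ht
    simp only [hc₀, hBn]
    rw [h]
end
end

section
/- (Theorem 6.6, half-turn symmetry in 3-space.) Let G be a finite simple graph with |E| = 3|V| − 6, let C ∈ O(3) be a half-turn (an orthogonal involution of ℝ³ with determinant 1 whose fixed subspace is 1-dimensional), S = {I, C}, and let Φ : S → Aut(G) be a homomorphism such that Φ(C) has no fixed vertex and fixes no edge setwise. Let (G,p) be an S-symmetric framework of type Φ in ℝ³ whose points p_i affinely span ℝ³ and which admits no nonzero fully (S,Φ)-symmetric self-stress (this last hypothesis playing the role of the paper's '(S,Φ)-generic' assumption, as licensed by Remark 6.2). Then (G,p) has a finite flex preserving the symmetry throughout the path. -/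
open scoped Classical

noncomputable section

open Filter Topology

lemma flex_abs {E F : Type*} [NormedAddCommGroup E] [NormedSpace ℝ E] [FiniteDimensional ℝ E]
    [NormedAddCommGroup F] [NormedSpace ℝ F] [FiniteDimensional ℝ F]
    (B : E →ₗ[ℝ] E →ₗ[ℝ] F) (hB : ∀ x y, B x y = B y x)
    (D : E →ₗ[ℝ] E →ₗ[ℝ] ℝ) (hD : ∀ x y, D x y = D y x)
    (a : E) (hs : LinearMap.range (B a) = ⊤) (v : E) (hv : B a v = 0) (hDv : D a v ≠ 0) :
    ∃ γ : ℝ → E, ContinuousOn γ (Set.Icc 0 1) ∧ γ 0 = a ∧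
      (∀ t ∈ Set.Icc (0:ℝ) 1, B (γ t) (γ t) = B a a) ∧
      (∀ t ∈ Set.Ioc (0:ℝ) 1, D (γ t) (γ t) ≠ D a a) := by
  have : CompleteSpace E := FiniteDimensional.complete ℝ E
  have : CompleteSpace F := FiniteDimensional.complete ℝ F
  set f : E → F := fun x => B x x
  set f' : E →L[ℝ] F := (2:ℝ) • LinearMap.toContinuousLinearMap (B a) with hf'def
  have hf : HasStrictFDerivAt f f' a := by
    have h := (B.toContinuousBilinearMap.hasStrictFDerivAt (x := a)).clm_apply
      (hasStrictFDerivAt_id a)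
    refine h.congr_fderiv ?_
    ext y
    simp [hf'def, two_smul, hB y a]
  have hd : HasFDerivAt (fun x => D x x) ((2:ℝ) • LinearMap.toContinuousLinearMap (D a)) a := by
    have h := (D.toContinuousBilinearMap.hasFDerivAt (x := a)).clm_apply
      (hasFDerivAt_id a)
    refine h.congr_fderiv ?_
    ext y
    simp [two_smul, hD y a]
  have hr : f'.range = ⊤ := by
    rw [eq_top_iff]
    intro y _
    obtain ⟨x, hx⟩ : y ∈ LinearMap.range (B a) := hs ▸ Submodule.mem_top
    refine ⟨(2:ℝ)⁻¹ • x, ?_⟩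
    simp [hf'def, hx]
  have hvk : v ∈ f'.ker := by
    simp [hf'def, hv]
  set w : f'.ker := ⟨v, hvk⟩
  set ψ : f'.ker → E := hf.implicitFunction f f' hr (f a)
  have hψ0 : ψ 0 = a := by
    have := (hf.implicitFunction_apply_image hr)
    simpa [ψ] using this
  have hψ : HasStrictFDerivAt ψ f'.ker.subtypeL 0 := hf.to_implicitFunction hr
  have hfψ : ∀ᶠ z in 𝓝 (0 : f'.ker), f (ψ z) = f a := by
    have := hf.map_implicitFunction_eq hr
    have h2 : Tendsto (fun z : f'.ker => (f a, z)) (𝓝 0) (𝓝 (f a, 0)) :=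
      (Continuous.prodMk_right (f a)).tendsto' _ _ rfl
    exact h2.eventually this
  obtain ⟨K, s, hsn, hlip⟩ := hψ.exists_lipschitzOnWith
  set c : ℝ → f'.ker := fun t => t • w
  have hcc : Continuous c := by fun_prop
  have hc0 : c 0 = 0 := by simp [c]
  have hct : Tendsto c (𝓝 0) (𝓝 0) := hcc.tendsto' _ _ hc0
  have hder : HasDerivAt (fun t => D (ψ (c t)) (ψ (c t))) (2 * D a v) 0 := by
    have h1 : HasDerivAt c w 0 := by
      simpa using (hasDerivAt_id (0:ℝ)).smul_const w
    have h2 : HasDerivAt (fun t => ψ (c t)) v 0 := by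
      have := HasFDerivAt.comp_hasDerivAt (x := (0:ℝ)) (f := c) (l := ψ) (l' := f'.ker.subtypeL) (by rw [hc0]; exact hψ.hasFDerivAt) h1
      simpa using! this
    have := HasFDerivAt.comp_hasDerivAt (x := (0:ℝ)) (f := fun t => ψ (c t)) (l := fun x => D x x) 
      (by simp only [hc0, hψ0]; exact hd) h2
    simpa using! this
  have hne : ∀ᶠ t in 𝓝[≠] (0:ℝ), D (ψ (c t)) (ψ (c t)) ≠ D a a := by
    exact hder.eventually_ne (by simpa using hDv)
  rw [eventually_nhdsWithin_iff] at hne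
  have hall := (hne.and (hct.eventually hfψ)).and (hct.eventually hsn)
  obtain ⟨δ, hδ, hball⟩ := Metric.eventually_nhds_iff.1 hall
  have hmem : ∀ t ∈ Set.Icc (0:ℝ) 1, dist (t * (δ/2)) 0 < δ := by
    intro t ht
    rw [Real.dist_eq, sub_zero, abs_of_nonneg (by have := ht.1; positivity)]
    nlinarith [ht.1, ht.2]
  refine ⟨fun t => ψ (c (t * (δ/2))), ?_, ?_, ?_, ?_⟩
  · refine hlip.continuousOn.comp (by fun_prop) ?_
    intro t ht
    exact (hball (hmem t ht)).2
  · simp [hc0, hψ0]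
  · intro t ht
    exact (hball (hmem t ht)).1.2
  · intro t ht
    refine (hball (hmem t ⟨ht.1.le, ht.2⟩)).1.1 ?_
    have := ht.1
    simp
    constructor <;> positivity

def symSub {ι M : Type*} [AddCommGroup M] [Module ℝ M] (τ : ι → ι) (C : M →ₗ[ℝ] M) :
    Submodule ℝ (ι → M) where
  carrier := {q | ∀ i, C (q i) = q (τ i)}
  add_mem' := by
    intro a b ha hb i
    simp [ha i, hb i]
  zero_mem' := by intro i; simp
  smul_mem' := by
    intro c a ha i
    simp [ha i]

lemma two_mul_finrank_symSub {ι M : Type*} [Fintype ι] [AddCommGroup M] [Module ℝ M]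
    [FiniteDimensional ℝ M]
    (τ : ι → ι) (hτ : ∀ i, τ (τ i) = i) (hτn : ∀ i, τ i ≠ i)
    (C : M →ₗ[ℝ] M) (hC : ∀ v, C (C v) = v) :
    2 * Module.finrank ℝ (symSub τ C) = Fintype.card ι * Module.finrank ℝ M := by
  let D : (ι → M) →ₗ[ℝ] (ι → M) :=
    { toFun := fun q i => C (q i) - q (τ i)
      map_add' := by intro a b; ext i; simp; abel
      map_smul' := by intro a b; ext i; simp [smul_sub] }
  have hker : LinearMap.ker D = symSub τ C := by
    ext q
    simp only [LinearMap.mem_ker, D]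
    constructor
    · intro h i
      exact sub_eq_zero.1 (congrFun h i)
    · intro h
      ext i
      exact sub_eq_zero.2 (h i)
  have hrange : LinearMap.range D = symSub τ (-C) := by
    ext q
    constructor
    · rintro ⟨r, rfl⟩ i
      simp [D, hC, hτ]
    · intro h
      refine ⟨fun i => (2:ℝ)⁻¹ • C (q i), ?_⟩
      ext i
      have h1 : q (τ i) = - C (q i) := by simpa using (h i).symm
      simp only [D, LinearMap.coe_mk, AddHom.coe_mk, h1, map_smul, map_neg, hC]
      module
  let o : ι ≃ Fin (Fintype.card ι) := Fintype.equivFin ι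
  let s : ι → ℝ := fun i => if o i < o (τ i) then 1 else -1
  have hs : ∀ i, s (τ i) = - s i := by
    intro i
    have hne : o (τ i) ≠ o i := fun h => hτn i (o.injective h)
    simp only [s, hτ]
    rcases lt_or_gt_of_ne hne with h | h
    · simp [h, h.not_gt]
    · simp [h, h.not_gt]
  have hss : ∀ i, s i * s i = 1 := by
    intro i; simp only [s]; split_ifs <;> simp
  have heq : Module.finrank ℝ (symSub τ C) = Module.finrank ℝ (symSub τ (-C)) := by
    refine LinearEquiv.finrank_eq
      { toFun := fun q => ⟨fun i => s i • q.1 i, fun i => ?_⟩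
        invFun := fun q => ⟨fun i => s i • q.1 i, fun i => ?_⟩
        map_add' := ?_
        map_smul' := ?_
        left_inv := ?_
        right_inv := ?_ }
    · have := q.2 i
      simp [hs, this]
    · intro a b; ext i; simp
    · intro a b; ext i; exact smul_comm _ _ _
    · have := q.2 i
      simp at this
      simp [hs, ← this]
    · intro a; ext i; simp [smul_smul, hss]
    · intro a; ext i; simp [smul_smul, hss]
  have := LinearMap.finrank_range_add_finrank_ker D
  rw [hker, hrange, ← heq, Module.finrank_pi_fintype] at this
  simp at this
  omega

lemma sum_nbr {V : Type*} [Fintype V] [DecidableEq V] (G : SimpleGraph V) [DecidableRel G.Adj]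
    (F : Sym2 V → ℝ) :
    ∑ i, ∑ j ∈ G.neighborFinset i, F s(i, j) = 2 * ∑ e : G.edgeSet, F e.1 := by
  have h1 : ∑ d : G.Dart, F d.edge = ∑ i, ∑ j ∈ G.neighborFinset i, F s(i, j) := by
    rw [← Finset.sum_fiberwise (s := Finset.univ) (g := fun d : G.Dart => d.fst)]
    refine Finset.sum_congr rfl fun i _ => ?_
    refine Finset.sum_bij (fun d _ => d.snd) ?_ ?_ ?_ ?_
    · intro d hd
      simp at hd
      subst hd
      simpa using d.adj
    · intro d hd d' hd' h
      simp at hd hd'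
      ext
      · simp [hd, hd']
      · exact h
    · intro j hj
      exact ⟨⟨(i, j), by simpa using hj⟩, by simp, rfl⟩
    · intro d hd
      simp at hd
      subst hd
      rfl
  have h2 : ∑ d : G.Dart, F d.edge = ∑ e : G.edgeSet, 2 * F e.1 := by
    rw [← Finset.sum_fiberwise (s := Finset.univ)
      (g := fun d : G.Dart => (⟨d.edge, d.edge_mem⟩ : G.edgeSet))]
    refine Finset.sum_congr rfl fun e _ => ?_
    have : ∀ d ∈ Finset.univ.filter (fun d : G.Dart => (⟨d.edge, d.edge_mem⟩ : G.edgeSet) = e), F d.edge = F e.1 := by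
      intro d hd
      simp at hd
      rw [← hd]
    rw [Finset.sum_congr rfl this, Finset.sum_const]
    have hc := G.dart_edge_fiber_card e.1 e.2
    have : (Finset.univ.filter (fun d : G.Dart => (⟨d.edge, d.edge_mem⟩ : G.edgeSet) = e)) = Finset.univ.filter (fun d : G.Dart => d.edge = e.1) := by
      ext d; simp [Subtype.ext_iff]
    rw [this]
    simp only [nsmul_eq_mul]
    congr 1
    exact_mod_cast hc
  rw [← h1, h2, Finset.mul_sum]

lemma rigid_zero {V : Type*} (C : Euc 3 ≃ₗᵢ[ℝ] Euc 3) (hC2 : ∀ v, C (C v) = v)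
    (hhalf : Module.finrank ℝ (fixedSpace C) = 1)
    (σ : V → V) (hnofixv : ∀ i : V, σ i ≠ i)
    (p : V → Euc 3) (hp : Function.Injective p)
    (hsym : ∀ i, C (p i) = p (σ i))
    (hspan : affineSpan ℝ (Set.range p) = ⊤)
    (v : V → Euc 3) (hv : ∀ i, C (v i) = v (σ i))
    (hT : ∀ k l, inner ℝ (p k - p l) (v k - v l) = 0) (o : V) (ho : v o = 0) : v = 0 := by
  set u : V → Euc 3 := fun i => p i - p o with hu
  set c : Euc 3 := p (σ o) - p o with hc
  have hc0 : c ≠ 0 := by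
    rw [hc, sub_ne_zero]; exact fun h => hnofixv o (hp h)
  have hCc : C c = - c := by
    rw [hc, map_sub, ← hsym, hC2]; abel
  have hvo : v (σ o) = 0 := by rw [← hv, ho, map_zero]
  -- skewness
  have hskew : ∀ i j, inner ℝ (v i) (u j) + inner ℝ (v j) (u i) = 0 := by
    intro i j
    have h1 := hT i j
    have h2 := hT i o
    have h3 := hT j o
    simp only [ho, sub_zero, inner_sub_left, inner_sub_right] at h1 h2 h3
    simp only [hu, inner_sub_right]
    simp only [real_inner_comm (v _) (p _)] at h1 h2 h3 ⊢
    linarith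
  have hspanu : Submodule.span ℝ (Set.range u) = ⊤ := by
    have h1 : vectorSpan ℝ (Set.range p) = ⊤ := by
      rw [← direction_affineSpan, hspan, AffineSubspace.direction_top]
    rw [vectorSpan_range_eq_span_range_vsub_right ℝ p o] at h1
    exact h1
  set R : Submodule ℝ (Euc 3 × Euc 3) := Submodule.span ℝ (Set.range fun i => (u i, v i)) with hR
  have hRs : ∀ a ∈ R, ∀ b ∈ R, inner ℝ a.2 b.1 + inner ℝ b.2 a.1 = 0 := by
    intro a ha b hb
    induction ha, hb using Submodule.span_induction₂ with
    | mem_mem x y hx hy =>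
      obtain ⟨i, rfl⟩ := hx
      obtain ⟨j, rfl⟩ := hy
      exact hskew i j
    | zero_left y hy => simp
    | zero_right x hx => simp
    | add_left x y z _ _ _ h1 h2 => 
      simp only [Prod.fst_add, Prod.snd_add, inner_add_left, inner_add_right]; linarith
    | add_right x y z _ _ _ h1 h2 => 
      simp only [Prod.fst_add, Prod.snd_add, inner_add_left, inner_add_right]; linarith
    | smul_left r x y _ _ h => 
      simp only [Prod.smul_fst, Prod.smul_snd, real_inner_smul_left, real_inner_smul_right]
      rw [← mul_add, h, mul_zero]
    | smul_right r x y _ _ h => 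
      simp only [Prod.smul_fst, Prod.smul_snd, real_inner_smul_left, real_inner_smul_right]
      rw [← mul_add, h, mul_zero]
  have hRsurj : ∀ x, ∃ y, (x, y) ∈ R := by
    intro x
    have hx : x ∈ Submodule.span ℝ (Set.range u) := hspanu ▸ Submodule.mem_top
    induction hx using Submodule.span_induction with
    | mem x hx =>
      obtain ⟨i, rfl⟩ := hx
      exact ⟨v i, Submodule.subset_span ⟨i, rfl⟩⟩
    | zero => exact ⟨0, R.zero_mem⟩
    | add x y _ _ h1 h2 =>
      obtain ⟨a, ha⟩ := h1
      obtain ⟨b, hb⟩ := h2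
      exact ⟨a + b, R.add_mem ha hb⟩
    | smul r x _ h =>
      obtain ⟨a, ha⟩ := h
      exact ⟨r • a, R.smul_mem r ha⟩
  have hR0 : ∀ y, ((0 : Euc 3), y) ∈ R → y = 0 := by
    intro y hy
    obtain ⟨z, hz⟩ := hRsurj y
    have := hRs _ hy _ hz
    simpa using this
  have hcR : (c, (0 : Euc 3)) ∈ R := by
    have : (u (σ o), v (σ o)) ∈ R := Submodule.subset_span ⟨σ o, rfl⟩
    rwa [hvo] at this
  have hRC : ∀ a ∈ R, (C a.1, C a.2) ∈ R := by
    intro a ha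
    induction ha using Submodule.span_induction with
    | mem x hx =>
      obtain ⟨i, rfl⟩ := hx
      have h1 : (u (σ i), v (σ i)) ∈ R := Submodule.subset_span ⟨σ i, rfl⟩
      have := R.sub_mem h1 hcR
      convert this using 1
      ext1
      · simp [hu, hc, hsym]
      · simp [hv]
    | zero => simp only [Prod.fst_zero, Prod.snd_zero, map_zero]; exact R.zero_mem
    | add x y _ _ h1 h2 => simpa using R.add_mem h1 h2
    | smul r x _ h => simpa using R.smul_mem r h
  obtain ⟨e, he0, he⟩ := finrank_eq_one_iff'.1 hhalf
  have hfix : ∀ x, x ∈ fixedSpace C ↔ C x = x := by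
    intro x
    simp [fixedSpace, sub_eq_zero]
  have hCe : C e.1 = e.1 := (hfix _).1 e.2
  have he0' : e.1 ≠ 0 := fun h => he0 (Subtype.ext h)
  have heR : (e.1, (0 : Euc 3)) ∈ R := by
    obtain ⟨y, hy⟩ := hRsurj e.1
    have h1 := hRC _ hy
    simp only [hCe] at h1
    have h2 := R.sub_mem h1 hy
    simp only [Prod.mk_sub_mk, sub_self] at h2
    have h3 : C y = y := sub_eq_zero.1 (hR0 _ h2)
    obtain ⟨k, hk⟩ := he ⟨y, (hfix y).2 h3⟩
    have hk' : y = k • e.1 := by rw [← Submodule.coe_smul, hk]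
    have h4 := hRs _ hy _ hy
    have h5 : inner ℝ y y = 0 := by
      nth_rewrite 2 [hk']
      rw [real_inner_smul_right]
      simp only at h4
      rw [show inner ℝ y e.1 = 0 by linarith, mul_zero]
    have : y = 0 := by simpa using h5
    rwa [this] at hy
  have hec : inner ℝ e.1 c = 0 := by
    have := C.inner_map_map e.1 c
    rw [hCe, hCc, inner_neg_right] at this
    linarith
  set W : Submodule ℝ (Euc 3) := Submodule.span ℝ (Set.range ![e.1, c]) with hW
  have hWf : Module.finrank ℝ W = 2 := by
    have hli : LinearIndependent ℝ ![e.1, c] := by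
      rw [LinearIndependent.pair_iff]
      intro a b hab
      have h1 : inner ℝ e.1 (a • e.1 + b • c) = 0 := by rw [hab, inner_zero_right]
      have h2 : inner ℝ c (a • e.1 + b • c) = 0 := by rw [hab, inner_zero_right]
      simp only [inner_add_right, real_inner_smul_right, hec, real_inner_comm e.1 c] at h1 h2
      have h3 : inner ℝ e.1 e.1 ≠ 0 := by simpa using he0'
      have h4 : inner ℝ c c ≠ 0 := by simpa using hc0
      constructor
      · simpa [h3, he0'] using h1
      · simpa [h4, hc0] using h2
    simpa using finrank_span_eq_card hli
  have hWR : ∀ w ∈ W, (w, (0 : Euc 3)) ∈ R := by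
    intro w hw
    rw [hW, Matrix.range_cons, Matrix.range_cons, Matrix.range_empty, Set.union_empty, Set.singleton_union, Submodule.mem_span_pair] at hw
    obtain ⟨a, b, rfl⟩ := hw
    simpa using R.add_mem (R.smul_mem a heR) (R.smul_mem b hcR)
  have hWo : Module.finrank ℝ Wᗮ = 1 := by
    have := W.finrank_add_finrank_orthogonal
    simp at this
    omega
  obtain ⟨f, hf0, hf⟩ := finrank_eq_one_iff'.1 hWo
  have hperp : ∀ a ∈ R, a.2 ∈ Wᗮ := by
    intro a ha
    rw [Submodule.mem_orthogonal']
    intro w hw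
    simpa using hRs _ ha _ (hWR w hw)
  have hfR : (f.1, (0 : Euc 3)) ∈ R := by
    obtain ⟨y, hy⟩ := hRsurj f.1
    obtain ⟨k, hk⟩ := hf ⟨y, hperp _ hy⟩
    have hk' : y = k • f.1 := by rw [← Submodule.coe_smul, hk]
    have h4 := hRs _ hy _ hy
    have h5 : inner ℝ y y = 0 := by
      nth_rewrite 2 [hk']
      rw [real_inner_smul_right]
      simp only at h4
      rw [show inner ℝ y f.1 = 0 by linarith, mul_zero]
    have : y = 0 := by simpa using h5
    rwa [this] at hy
  funext i
  have hi : (u i, v i) ∈ R := Submodule.subset_span ⟨i, rfl⟩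
  have hui : (u i, (0 : Euc 3)) ∈ R := by
    obtain ⟨w, hw, z, hz, h⟩ := W.exists_add_mem_mem_orthogonal (u i)
    obtain ⟨k, hk⟩ := hf ⟨z, hz⟩
    have hk' : z = k • f.1 := by rw [← Submodule.coe_smul, hk]
    rw [h, hk']
    simpa using R.add_mem (hWR w hw) (R.smul_mem k hfR)
  have := R.sub_mem hi hui
  simp only [Prod.mk_sub_mk, sub_self, sub_zero] at this
  exact hR0 _ this

lemma edge_inner {V : Type*} {e : Sym2 V} {i j : V} (h : e = s(i, j)) (q r : V → Euc 3) :
    inner ℝ (q (Quot.out e).1 - q (Quot.out e).2) (r (Quot.out e).1 - r (Quot.out e).2)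
      = inner ℝ (q i - q j) (r i - r j) := by
  have h1 : s((Quot.out e).1, (Quot.out e).2) = s(i, j) := by
    rw [← h]; exact Quot.out_eq e
  rcases Sym2.eq_iff.1 h1 with ⟨h2, h3⟩ | ⟨h2, h3⟩
  · rw [h2, h3]
  · rw [h2, h3, ← neg_sub (q i), ← neg_sub (r i), inner_neg_neg]

/-- bilinear form attached to a pair -/
def pairForm {V : Type*} (k l : V) : (V → Euc 3) →ₗ[ℝ] (V → Euc 3) →ₗ[ℝ] ℝ :=
  LinearMap.mk₂ ℝ (fun q r => inner ℝ (q k - q l) (r k - r l))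
    (by intro a b c; simp only [Pi.add_apply, add_sub_add_comm, inner_add_left])
    (by intro a b c; simp only [Pi.smul_apply, ← smul_sub, real_inner_smul_left, smul_eq_mul])
    (by intro a b c; simp only [Pi.add_apply, add_sub_add_comm, inner_add_right])
    (by intro a b c; simp only [Pi.smul_apply, ← smul_sub, real_inner_smul_right, smul_eq_mul])

lemma pairForm_apply {V : Type*} (k l : V) (q r : V → Euc 3) :
    pairForm k l q r = inner ℝ (q k - q l) (r k - r l) := rfl

/-- Theorem 6.6, half-turn symmetry in 3-space: `C ∈ O(3)` a
half-turn (orthogonal involution, determinant 1, 1-dimensional fixed subspace),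
`S = {I, C}`, `Φ(C) = σ` has no fixed vertex and fixes no edge setwise,
`|E| = 3|V| - 6`; then a symmetric framework spanning `ℝ³` with no nonzero
fully symmetric self-stress has a symmetry-preserving finite flex. -/
theorem stmt_6 {V : Type*} [Fintype V] [DecidableEq V]
    (G : SimpleGraph V) [DecidableRel G.Adj]
    (hcount : G.edgeFinset.card + 6 = 3 * Fintype.card V)
    (C : Euc 3 ≃ₗᵢ[ℝ] Euc 3) (hC2 : ∀ v, C (C v) = v)
    (hdet : LinearMap.det (C.toLinearEquiv.toLinearMap) = 1)
    (hhalf : Module.finrank ℝ (fixedSpace C) = 1)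
    (σ : Equiv.Perm V) (hσ2 : σ * σ = 1)
    (hσadj : ∀ i j : V, G.Adj (σ i) (σ j) ↔ G.Adj i j)
    (hnofixv : ∀ i : V, σ i ≠ i)
    (hnofixe : ∀ e ∈ G.edgeSet, Sym2.map σ e ≠ e)
    (p : V → Euc 3) (hp : Function.Injective p)
    (hsym : ∀ i, C (p i) = p (σ i))
    (hspan : affineSpan ℝ (Set.range p) = ⊤)
    (hnostress : ∀ ω : Sym2 V → ℝ,
      (∀ i : V, ∑ j ∈ G.neighborFinset i, ω s(i, j) • (p i - p j) = 0) →
      (∀ e ∈ G.edgeSet, ω (Sym2.map σ e) = ω e) →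
      ∀ e ∈ G.edgeSet, ω e = 0) :
    ∃ P : ℝ → V → Euc 3,
      ContinuousOn P (Set.Icc 0 1) ∧
      P 0 = p ∧
      (∀ t ∈ Set.Icc (0:ℝ) 1, ∀ i j : V, G.Adj i j → ‖P t i - P t j‖ = ‖p i - p j‖) ∧
      (∃ k l : V, ∀ t ∈ Set.Ioc (0:ℝ) 1, ‖P t k - P t l‖ ≠ ‖p k - p l‖) ∧
      (∀ t ∈ Set.Icc (0:ℝ) 1, ∀ i, C (P t i) = P t (σ i)) := by
  have hσσ : ∀ i, σ (σ i) = i := fun i => by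
    rw [← Equiv.Perm.mul_apply, hσ2, Equiv.Perm.one_apply]
  have hmapmem : ∀ e ∈ G.edgeSet, Sym2.map σ e ∈ G.edgeSet := by
    intro e
    induction e using Sym2.ind with
    | _ i j => simpa using (hσadj i j).2
  have hmapmap : ∀ e : Sym2 V, Sym2.map σ (Sym2.map σ e) = e := by
    intro e
    induction e using Sym2.ind with
    | _ i j => simp [hσσ]
  let τ : G.edgeSet → G.edgeSet := fun e => ⟨Sym2.map σ e.1, hmapmem e.1 e.2⟩
  have hττ : ∀ e, τ (τ e) = e := fun e => Subtype.ext (hmapmap e.1)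
  have hτn : ∀ e, τ e ≠ e := fun e h => hnofixe e.1 e.2 (congrArg Subtype.val h)
  let CL : Euc 3 →ₗ[ℝ] Euc 3 := C.toLinearEquiv.toLinearMap
  have hCL : ∀ x, CL x = C x := fun _ => rfl
  let X := symSub σ CL
  let Y := symSub τ (LinearMap.id : ℝ →ₗ[ℝ] ℝ)
  have hX : ∀ (q : X) i, C (q.1 i) = q.1 (σ i) := fun q i => q.2 i
  have hY : ∀ (y : Y) e, y.1 (τ e) = y.1 e := fun y e => (y.2 e).symm
  have hdX := two_mul_finrank_symSub σ hσσ hnofixv CL hC2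
  have hdY := two_mul_finrank_symSub τ hττ hτn (LinearMap.id : ℝ →ₗ[ℝ] ℝ) (fun _ => rfl)
  have hcardE : Fintype.card G.edgeSet = G.edgeFinset.card := by
    rw [SimpleGraph.edgeFinset, Set.toFinset_card]
  rw [hcardE] at hdY
  simp only [Module.finrank_self, mul_one, finrank_euclideanSpace, Fintype.card_fin] at hdX hdY
  -- the bilinear map
  let b0 : X → X → Y := fun q r => ⟨fun e => pairForm (Quot.out e.1).1 (Quot.out e.1).2 q.1 r.1, by
    intro e
    obtain ⟨e, he⟩ := e
    induction e using Sym2.ind with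
    | _ i j =>
      simp only [pairForm_apply, LinearMap.id_apply]
      rw [edge_inner (i := i) (j := j) rfl,
        edge_inner (e := (τ ⟨s(i, j), he⟩).1) (i := σ i) (j := σ j) rfl]
      rw [← hX, ← hX, ← hX, ← hX, ← map_sub, ← map_sub, C.inner_map_map]⟩
  let B : X →ₗ[ℝ] X →ₗ[ℝ] Y := LinearMap.mk₂ ℝ b0
    (by intro a b c; ext e; simp [b0])
    (by intro a b c; ext e; simp [b0])
    (by intro a b c; ext e; simp [b0])
    (by intro a b c; ext e; simp [b0])
  have hBapp : ∀ (q r : X) (i j : V) (h : G.Adj i j),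
      (B q r).1 ⟨s(i, j), h⟩ = inner ℝ (q.1 i - q.1 j) (r.1 i - r.1 j) := by
    intro q r i j h
    exact edge_inner (e := s(i, j)) rfl _ _
  have hBsym : ∀ x y, B x y = B y x := by
    intro x y
    ext e
    change pairForm _ _ x.1 y.1 = pairForm _ _ y.1 x.1
    rw [pairForm_apply, pairForm_apply, real_inner_comm]
  let p0 : X := ⟨p, hsym⟩
  have hsurj : LinearMap.range (B p0) = ⊤ := by
    by_contra hne
    obtain ⟨φ, hφ0, hφ⟩ := Submodule.exists_le_ker_of_lt_top _ (lt_top_iff_ne_top.2 hne)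
    let dl : G.edgeSet → Y := fun e => ⟨Pi.single e 1 + Pi.single (τ e) 1, by
      intro g
      have h1 : (τ g = e) ↔ (g = τ e) :=
        ⟨fun h => by rw [← h, hττ], fun h => by rw [h, hττ]⟩
      have h2 : (τ g = τ e) ↔ (g = e) :=
        ⟨fun h => by rw [← hττ g, h, hττ], fun h => by rw [h]⟩
      simp only [LinearMap.id_apply, Pi.add_apply, Pi.single_apply, h1, h2]
      rw [add_comm]⟩
    let ω : Sym2 V → ℝ := fun e => if h : e ∈ G.edgeSet then φ (dl ⟨e, h⟩) else 0
    have hω : ∀ e : G.edgeSet, ω e.1 = φ (dl e) := fun e => by simp only [ω, dif_pos e.2]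
    have hωσ : ∀ e ∈ G.edgeSet, ω (Sym2.map σ e) = ω e := by
      intro e he
      have h1 := hω (τ ⟨e, he⟩)
      have h2 := hω ⟨e, he⟩
      simp only at h2
      rw [h2]
      refine h1.trans ?_
      congr 1
      ext g
      simp only [dl, hττ]
      rw [add_comm]
    have hsumφ : ∀ y : Y, ∑ e : G.edgeSet, ω e.1 * y.1 e = 2 * φ y := by
      intro y
      have : (2:ℝ) • y = ∑ e : G.edgeSet, y.1 e • dl e := by
        ext g
        have h1 : ∀ e, (g = τ e) ↔ (τ g = e) := fun e =>
          ⟨fun h => by rw [h, hττ], fun h => by rw [← h, hττ]⟩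
        simp [dl, Pi.single_apply, mul_add, Finset.sum_add_distrib, h1, hY, two_mul]
      rw [← smul_eq_mul, ← map_smul, this, map_sum]
      refine Finset.sum_congr rfl fun e _ => ?_
      rw [map_smul, hω, smul_eq_mul, mul_comm]
    let r : V → Euc 3 := fun i => ∑ j ∈ G.neighborFinset i, ω s(i, j) • (p i - p j)
    have hr : ∀ i, C (r i) = r (σ i) := by
      intro i
      simp only [r, map_sum]
      refine Finset.sum_bij (fun j _ => σ j) ?_ ?_ ?_ ?_
      · intro j hj
        simpa [hσadj] using hj
      · intro a _ b _ h
        exact σ.injective h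
      · intro j hj
        refine ⟨σ j, ?_, hσσ j⟩
        rw [SimpleGraph.mem_neighborFinset] at hj ⊢
        rw [← hσadj, hσσ]; exact hj
      · intro j hj
        rw [SimpleGraph.mem_neighborFinset] at hj
        have := hωσ s(i, j) hj
        rw [Sym2.map_mk] at this
        rw [map_smul, map_sub, hsym, hsym]
        congr 1
        exact this.symm
    let r0 : X := ⟨r, hr⟩
    have hφr : φ (B p0 r0) = 0 := hφ ⟨r0, rfl⟩
    have hzero : ∑ e : G.edgeSet, ω e.1 * (B p0 r0).1 e = 0 := by
      rw [hsumφ, hφr, mul_zero]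
    let F : Sym2 V → ℝ := fun e => ω e *
      inner ℝ (p (Quot.out e).1 - p (Quot.out e).2) (r (Quot.out e).1 - r (Quot.out e).2)
    have hF := sum_nbr G F
    have hF0 : ∑ e : G.edgeSet, F e.1 = 0 := hzero
    rw [hF0, mul_zero] at hF
    have hFe : ∀ i j, F s(i, j) = ω s(i, j) * inner ℝ (p i - p j) (r i)
        + ω s(j, i) * inner ℝ (p j - p i) (r j) := by
      intro i j
      simp only [F]
      rw [edge_inner (i := i) (j := j) rfl, inner_sub_right, ← neg_sub (p i) (p j),
        inner_neg_left, Sym2.eq_swap (a := j)]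
      ring
    have hrr : ∑ i, ∑ j ∈ G.neighborFinset i, ω s(i, j) * inner ℝ (p i - p j) (r i)
        = ∑ i, inner ℝ (r i) (r i) := by
      refine Finset.sum_congr rfl fun i _ => ?_
      conv_rhs => rw [show inner ℝ (r i) (r i) =
        inner ℝ (∑ j ∈ G.neighborFinset i, ω s(i, j) • (p i - p j)) (r i) from rfl]
      rw [sum_inner]
      refine Finset.sum_congr rfl fun j _ => ?_
      rw [real_inner_smul_left]
    have hswap : ∑ i, ∑ j ∈ G.neighborFinset i, ω s(j, i) * inner ℝ (p j - p i) (r j)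
        = ∑ i, ∑ j ∈ G.neighborFinset i, ω s(i, j) * inner ℝ (p i - p j) (r i) := by
      refine Finset.sum_comm' ?_
      intro x y
      simp [G.adj_comm]
    simp only [hFe, Finset.sum_add_distrib] at hF
    rw [hswap, hrr] at hF
    have hsq : ∑ i, inner ℝ (r i) (r i) = 0 := by linarith
    have hr0 : ∀ i, r i = 0 := by
      intro i
      have := (Finset.sum_eq_zero_iff_of_nonneg
        (fun i _ => real_inner_self_nonneg (x := r i))).1 hsq i (Finset.mem_univ i)
      exact inner_self_eq_zero.1 this
    have hω0 := hnostress ω hr0 hωσ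
    apply hφ0
    ext y
    have h1 := hsumφ y
    rw [Finset.sum_eq_zero (fun e _ => by rw [hω0 e.1 e.2, zero_mul])] at h1
    simp only [LinearMap.zero_apply]
    linarith
  -- kernel dimension
  have hker : 3 ≤ Module.finrank ℝ (LinearMap.ker (B p0)) := by
    have h1 := LinearMap.finrank_range_add_finrank_ker (B p0)
    rw [hsurj, finrank_top] at h1
    have h2 : 2 * Module.finrank ℝ X = Fintype.card V * 3 := hdX
    have h3 : 2 * Module.finrank ℝ Y = G.edgeFinset.card := hdY
    omega
  obtain ⟨o⟩ : Nonempty V := by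
    by_contra h
    rw [not_nonempty_iff] at h
    simp at hcount
  have hex : ∃ v ∈ LinearMap.ker (B p0), ∃ k l, pairForm k l p v.1 ≠ 0 := by
    by_contra hcon
    push Not at hcon
    let a : Euc 3 := p o - p (σ o)
    have ha : a ≠ 0 := sub_ne_zero.2 fun h => hnofixv o (hp h).symm
    have hv0 : ∀ v : X, v ∈ LinearMap.ker (B p0) → v.1 o ∈ (Submodule.span ℝ {a})ᗮ := by
      intro v hv
      rw [Submodule.mem_orthogonal_singleton_iff_inner_right]
      have h1 : inner ℝ (p o - p (σ o)) (v.1 o - v.1 (σ o)) = 0 := hcon v hv o (σ o)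
      have h2 : inner ℝ a (C (v.1 o)) = - inner ℝ a (v.1 o) := by
        rw [← C.inner_map_map, hC2]
        have : C a = - a := by
          simp only [a, map_sub, hsym, hσσ]; abel
        rw [this, inner_neg_left]
      rw [inner_sub_right, ← hX] at h1
      change inner ℝ a _ - inner ℝ a _ = 0 at h1
      linarith
    let ev : LinearMap.ker (B p0) →ₗ[ℝ] (Submodule.span ℝ {a})ᗮ :=
      { toFun := fun v => ⟨v.1.1 o, hv0 v.1 v.2⟩
        map_add' := by intro x y; rfl
        map_smul' := by intro x y; rfl }
    have hinj : Function.Injective ev := by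
      intro v w hvw
      have h0 : v.1.1 o = w.1.1 o := congrArg Subtype.val hvw
      have h1 : (v.1 - w.1).1 o = 0 := sub_eq_zero.2 h0
      have h2 := rigid_zero C hC2 hhalf σ hnofixv p hp hsym hspan (v.1 - w.1).1 (hX (v.1 - w.1))
        (fun k l => hcon (v.1 - w.1) (Submodule.sub_mem _ v.2 w.2) k l) o h1
      exact Subtype.ext (sub_eq_zero.1 (Subtype.ext h2))
    have h1 := LinearMap.finrank_le_finrank_of_injective hinj
    have h2 := (Submodule.span ℝ {a}).finrank_add_finrank_orthogonal
    rw [finrank_span_singleton ha] at h2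
    simp only [finrank_euclideanSpace, Fintype.card_fin] at h2
    omega
  obtain ⟨v, hvk, k, l, hkl⟩ := hex
  let D : X →ₗ[ℝ] X →ₗ[ℝ] ℝ := (pairForm k l).domRestrict₁₂ X X
  obtain ⟨γ, hγc, hγ0, hγB, hγD⟩ := flex_abs B hBsym D
    (fun x y => by
      change pairForm k l x.1 y.1 = pairForm k l y.1 x.1
      rw [pairForm_apply, pairForm_apply, real_inner_comm]) p0 hsurj v (LinearMap.mem_ker.1 hvk) hkl
  refine ⟨fun t => (γ t).1, continuous_subtype_val.comp_continuousOn hγc, ?_, ?_, ⟨k, l, ?_⟩, ?_⟩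
  · simp only [hγ0, p0]
  · intro t ht i j hij
    have h1 := congrArg (fun y : Y => y.1 ⟨s(i, j), hij⟩) (hγB t ht)
    simp only [hBapp] at h1
    rw [real_inner_self_eq_norm_sq, real_inner_self_eq_norm_sq] at h1
    exact (sq_eq_sq₀ (norm_nonneg _) (norm_nonneg _)).1 h1
  · intro t ht h
    apply hγD t ht
    change inner ℝ ((γ t).1 k - (γ t).1 l) ((γ t).1 k - (γ t).1 l) = inner ℝ (p k - p l) (p k - p l)
    rw [real_inner_self_eq_norm_sq, real_inner_self_eq_norm_sq, h]
  · intro t ht i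
    exact hX (γ t) i
end
end

section
/- (Theorem 6.8(i), half-turn symmetry in dimension 4.) Let G be a finite simple graph with |E| = 4|V| − 10, let C ∈ O(4) be a half-turn (an orthogonal involution of ℝ⁴ whose fixed subspace is 2-dimensional), S = {I, C}, and let Φ : S → Aut(G) be a homomorphism such that Φ(C) fixes no edge setwise (b_C = 0). Let (G,p) be an S-symmetric framework of type Φ in ℝ⁴ whose points p_i affinely span ℝ⁴ and which admits no nonzero fully (S,Φ)-symmetric self-stress (this last hypothesis playing the role of the paper's '(S,Φ)-generic' assumption, as licensed by Remark 6.2). Then (G,p) has a finite flex preserving the symmetry throughout the path. -/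
open scoped Classical

noncomputable section

theorem exists_curve {E F : Type*} [NormedAddCommGroup E] [NormedSpace ℝ E] [CompleteSpace E]
    [NormedAddCommGroup F] [NormedSpace ℝ F] [FiniteDimensional ℝ F]
    (f : E → F) (f' : E →L[ℝ] F) (a : E) (hf : HasStrictFDerivAt f f' a) (hf' : f'.range = ⊤)
    (u : E) (hu : f' u = 0) :
    ∃ γ : ℝ → E, γ 0 = a ∧ HasDerivAt γ u 0 ∧
      ∃ δ > 0, ContinuousOn γ (Set.Icc 0 δ) ∧ ∀ t ∈ Set.Icc (0:ℝ) δ, f (γ t) = f a := by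
  set φ := hf.implicitFunction f f' hf' (f a) with hφ
  have h1 : HasStrictFDerivAt φ f'.ker.subtypeL 0 := hf.to_implicitFunction hf'
  let w : f'.ker := ⟨u, hu⟩
  have hw : HasStrictDerivAt (fun t : ℝ => t • w) w 0 := by
    simpa using (hasStrictDerivAt_id (0:ℝ)).smul_const w
  have h1' : HasStrictFDerivAt φ f'.ker.subtypeL ((0:ℝ) • w) := by simpa using h1
  have h2 : HasStrictDerivAt (fun t : ℝ => φ (t • w)) u 0 := by
    have := h1'.comp_hasStrictDerivAt (0:ℝ) hw
    simpa [w, Function.comp_def] using this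
  refine ⟨fun t => φ (t • w), ?_, h2.hasDerivAt, ?_⟩
  · simp [hφ]
  · obtain ⟨K, s, hs, hK⟩ := h2.hasStrictFDerivAt.exists_lipschitzOnWith
    have h3 : ∀ᶠ t : ℝ in nhds 0, f (φ (t • w)) = f a := by
      have := hf.map_implicitFunction_eq hf'
      have ht : Filter.Tendsto (fun t : ℝ => (f a, t • w)) (nhds 0) (nhds (f a, 0)) := by
        have : Continuous (fun t : ℝ => (f a, t • w)) := by fun_prop
        simpa using this.tendsto 0
      exact ht.eventually this
    obtain ⟨ε, hε, hb⟩ := Metric.eventually_nhds_iff.1 (h3.and hs)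
    have hmem : ∀ t ∈ Set.Icc (0:ℝ) (ε/2), dist t 0 < ε := by
      intro t ht
      rw [Real.dist_eq, sub_zero, abs_of_nonneg ht.1]
      linarith [ht.2]
    refine ⟨ε/2, by positivity, ?_, fun t ht => (hb (hmem t ht)).1⟩
    exact hK.continuousOn.mono fun t ht => (hb (hmem t ht)).2

/-- The bilinear form measuring edges. -/
def edgeForm {V : Type*} (q u : V → Euc 4) : Sym2 V → ℝ :=
  Sym2.lift ⟨fun i j => inner ℝ (q i - q j) (u i - u j), fun i j => by
    show inner ℝ (q i - q j) (u i - u j) = inner ℝ (q j - q i) (u j - u i)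
    rw [← neg_sub (q j), ← neg_sub (u j), inner_neg_neg]⟩

@[simp] theorem edgeForm_mk {V : Type*} (q u : V → Euc 4) (i j : V) :
    edgeForm q u s(i, j) = inner ℝ (q i - q j) (u i - u j) := rfl

theorem edgeForm_comm {V : Type*} (q u : V → Euc 4) (e : Sym2 V) :
    edgeForm q u e = edgeForm u q e := by
  induction e with | _ i j => simp [real_inner_comm]

theorem edgeForm_add {V : Type*} (q u v : V → Euc 4) (e : Sym2 V) :
    edgeForm q (u + v) e = edgeForm q u e + edgeForm q v e := by
  induction e with
  | _ i j =>
    simp only [edgeForm_mk, Pi.add_apply, ← inner_add_right]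
    congr 1; abel

theorem edgeForm_smul {V : Type*} (q u : V → Euc 4) (c : ℝ) (e : Sym2 V) :
    edgeForm q (c • u) e = c * edgeForm q u e := by
  induction e with
  | _ i j => simp only [edgeForm_mk, Pi.smul_apply, ← smul_sub, real_inner_smul_right]

/-- Symmetric configurations. -/
def symU {V : Type*} (C : Euc 4 ≃ₗᵢ[ℝ] Euc 4) (σ : Equiv.Perm V) : Submodule ℝ (V → Euc 4) where
  carrier := {u | ∀ i, C (u i) = u (σ i)}
  add_mem' := fun ha hb i => by simp [ha i, hb i]
  zero_mem' := fun i => by simp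
  smul_mem' := fun c u hu i => by simp [hu i]

/-- Symmetric edge functions. -/
def symR {V : Type*} [Fintype V] (G : SimpleGraph V) (σ : Equiv.Perm V) :
    Submodule ℝ (EuclideanSpace ℝ (Sym2 V)) where
  carrier := {ω | (∀ e, ω (Sym2.map σ e) = ω e) ∧ ∀ e, e ∉ G.edgeSet → ω e = 0}
  add_mem' := fun ha hb => ⟨fun e => by simp [ha.1 e, hb.1 e], fun e he => by
    simp [ha.2 e he, hb.2 e he]⟩
  zero_mem' := ⟨fun e => by simp, fun e he => by simp⟩
  smul_mem' := fun c u hu => ⟨fun e => by simp [hu.1 e], fun e he => by simp [hu.2 e he]⟩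

theorem edgeForm_map {V : Type*} (C : Euc 4 ≃ₗᵢ[ℝ] Euc 4) (σ : Equiv.Perm V)
    (q u q' u' : V → Euc 4) (h1 : ∀ i, C (q i) = q' (σ i)) (h2 : ∀ i, C (u i) = u' (σ i))
    (e : Sym2 V) : edgeForm q' u' (Sym2.map σ e) = edgeForm q u e := by
  induction e with
  | _ i j =>
    simp only [Sym2.map_mk, edgeForm_mk, ← h1, ← h2, ← map_sub, LinearIsometryEquiv.inner_map_map]

theorem map_mem_edgeSet {V : Type*} (G : SimpleGraph V) (σ : Equiv.Perm V)
    (hσadj : ∀ i j : V, G.Adj (σ i) (σ j) ↔ G.Adj i j) (e : Sym2 V) :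
    Sym2.map σ e ∈ G.edgeSet ↔ e ∈ G.edgeSet := by
  induction e with | _ i j => simp [hσadj]

/-- The bilinear rigidity map. -/
def rigB {V : Type*} [Fintype V] (G : SimpleGraph V)
    (C : Euc 4 ≃ₗᵢ[ℝ] Euc 4) (σ : Equiv.Perm V)
    (hσadj : ∀ i j : V, G.Adj (σ i) (σ j) ↔ G.Adj i j) :
    symU C σ →ₗ[ℝ] symU C σ →ₗ[ℝ] symR G σ :=
  LinearMap.mk₂ ℝ (fun q u => ⟨WithLp.toLp 2 (fun e => if e ∈ G.edgeSet then
      edgeForm (q : V → Euc 4) (u : V → Euc 4) e else 0), by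
        refine ⟨fun e => ?_, fun e he => by simp [he]⟩
        simp only [map_mem_edgeSet G σ hσadj, edgeForm_map C σ _ _ _ _ q.2 u.2]⟩)
    (fun a b c => by
      ext e; by_cases he : e ∈ G.edgeSet
      · simp [he, edgeForm_comm _ (c : V → Euc 4), edgeForm_add]
      · simp [he])
    (fun r a b => by
      ext e; by_cases he : e ∈ G.edgeSet
      · simp [he, edgeForm_comm _ (b : V → Euc 4), edgeForm_smul]
      · simp [he])
    (fun a b c => by
      ext e; by_cases he : e ∈ G.edgeSet
      · simp [he, edgeForm_add]
      · simp [he])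
    (fun r a b => by
      ext e; by_cases he : e ∈ G.edgeSet
      · simp [he, edgeForm_smul]
      · simp [he])

theorem rigB_apply {V : Type*} [Fintype V] (G : SimpleGraph V)
    (C : Euc 4 ≃ₗᵢ[ℝ] Euc 4) (σ : Equiv.Perm V)
    (hσadj : ∀ i j : V, G.Adj (σ i) (σ j) ↔ G.Adj i j) (q u : symU C σ) (e : Sym2 V) :
    (rigB G C σ hσadj q u : EuclideanSpace ℝ (Sym2 V)) e = if e ∈ G.edgeSet then
      edgeForm (q : V → Euc 4) (u : V → Euc 4) e else 0 := rfl

/-- The symmetrization operator pieces: an anticommuting involution. -/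
theorem exists_J (C : Euc 4 ≃ₗᵢ[ℝ] Euc 4) (hC2 : ∀ v, C (C v) = v)
    (hhalf : Module.finrank ℝ (fixedSpace C) = 2) :
    ∃ J : Euc 4 →ₗ[ℝ] Euc 4, (∀ x, J (J x) = x) ∧ ∀ x, C (J x) = - J (C x) := by
  have hF : ∀ x, x ∈ fixedSpace C ↔ C x = x := fun x => by
    simp [fixedSpace, LinearMap.mem_ker, sub_eq_zero]
  have hF' : ∀ x, x ∈ (fixedSpace C)ᗮ ↔ C x = - x := by
    intro x
    constructor
    · intro hx
      rw [Submodule.mem_orthogonal] at hx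
      have h1 : x + C x ∈ fixedSpace C := by rw [hF, map_add, hC2, add_comm]
      have h2 := hx _ h1
      have h3 : inner ℝ (x + C x) (C x) = 0 := by
        rw [← h2, ← C.inner_map_map (x + C x) x, map_add, hC2, add_comm]
      have h4 : inner ℝ (x + C x) (x + C x) = 0 := by
        rw [inner_add_right, h2, h3, add_zero]
      have h5 := inner_self_eq_zero.1 h4
      exact eq_neg_of_add_eq_zero_right h5
    · intro hx
      rw [Submodule.mem_orthogonal]
      intro y hy
      rw [hF] at hy
      have := C.inner_map_map y x
      rw [hy, hx, inner_neg_right] at this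
      linarith
  have hdim : Module.finrank ℝ (fixedSpace C)ᗮ = 2 := by
    have := (fixedSpace C).finrank_add_finrank_orthogonal
    simp at this
    omega
  let φ : fixedSpace C ≃ₗ[ℝ] (fixedSpace C)ᗮ := LinearEquiv.ofFinrankEq _ _ (by rw [hhalf, hdim])
  let D : (fixedSpace C × (fixedSpace C)ᗮ) ≃ₗ[ℝ] Euc 4 :=
    Submodule.prodEquivOfIsCompl _ _ (fixedSpace C).isCompl_orthogonal
  have hD : ∀ a b, D (a, b) = (a : Euc 4) + b := fun a b => by simp [D]
  let J0 : (fixedSpace C × (fixedSpace C)ᗮ) →ₗ[ℝ] (fixedSpace C × (fixedSpace C)ᗮ) :=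
    LinearMap.prod (φ.symm.toLinearMap ∘ₗ LinearMap.snd _ _ _) (φ.toLinearMap ∘ₗ LinearMap.fst _ _ _)
  refine ⟨D.toLinearMap ∘ₗ J0 ∘ₗ D.symm.toLinearMap, ?_, ?_⟩
  · intro x
    simp [J0]
  · intro x
    obtain ⟨⟨a, b⟩, rfl⟩ := D.surjective x
    have e1 : ∀ a b, C (D (a, b)) = D (a, -b) := fun a b => by
      simp [hD, (hF _).1 a.2, (hF' _).1 b.2]
    rw [e1]
    simp only [LinearMap.comp_apply, LinearEquiv.coe_coe, LinearEquiv.symm_apply_apply]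
    simp only [J0, LinearMap.prod_apply, e1, ← map_neg]
    simp

theorem finrank_symU {V : Type*} [Fintype V] (C : Euc 4 ≃ₗᵢ[ℝ] Euc 4) (hC2 : ∀ v, C (C v) = v)
    (hhalf : Module.finrank ℝ (fixedSpace C) = 2) (σ : Equiv.Perm V) (hσ : ∀ i, σ (σ i) = i) :
    4 * Fintype.card V ≤ 2 * Module.finrank ℝ (symU C σ) := by
  obtain ⟨J, hJ, hJC⟩ := exists_J C hC2 hhalf
  let Jv : (V → Euc 4) →ₗ[ℝ] (V → Euc 4) := J.compLeft V
  let T : (symU C σ × symU C σ) →ₗ[ℝ] (V → Euc 4) :=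
    LinearMap.coprod (symU C σ).subtype (Jv ∘ₗ (symU C σ).subtype)
  have hT : Function.Surjective T := by
    intro w
    refine ⟨(⟨fun i => (1/2 : ℝ) • (w i + C (w (σ i))), fun i => ?_⟩,
      ⟨fun i => J ((1/2 : ℝ) • (w i - C (w (σ i)))), fun i => ?_⟩), ?_⟩
    · simp [hC2, hσ, add_comm]
    · rw [hJC]; simp only [map_smul, map_sub, hC2, hσ]; module
    · funext i
      simp only [T, Jv, LinearMap.coprod_apply, Submodule.subtype_apply, LinearMap.comp_apply,
        Pi.add_apply, LinearMap.compLeft_apply, Function.comp_apply, hJ]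
      module
  have := LinearMap.finrank_le_finrank_of_surjective (f := T) hT
  simp [Module.finrank_pi_fintype] at this
  omega

theorem finrank_symR {V : Type*} [Fintype V] [DecidableEq V]
    (G : SimpleGraph V) [DecidableRel G.Adj] (σ : Equiv.Perm V) (hσ : ∀ i, σ (σ i) = i)
    (hσadj : ∀ i j : V, G.Adj (σ i) (σ j) ↔ G.Adj i j)
    (hnofixe : ∀ e ∈ G.edgeSet, Sym2.map σ e ≠ e) :
    2 * Module.finrank ℝ (symR G σ) ≤ G.edgeFinset.card := by
  obtain ⟨n, ⟨ι⟩⟩ := Finite.exists_equiv_fin (Sym2 V)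
  have hmm : ∀ e : Sym2 V, Sym2.map σ (Sym2.map σ e) = e := fun e => by
    induction e with | _ i j => simp [hσ]
  let s : Sym2 V → ℝ := fun e => if ι e < ι (Sym2.map σ e) then 1 else -1
  have hs : ∀ e ∈ G.edgeSet, s (Sym2.map σ e) = - s e := by
    intro e he
    have hne : ι (Sym2.map σ e) ≠ ι e := fun h => hnofixe e he (ι.injective h)
    simp only [s, hmm]
    rcases lt_or_gt_of_ne hne with h | h
    · simp [h, not_lt_of_gt h]
    · simp [h, not_lt_of_gt h]
  have hs0 : ∀ e, s e ≠ 0 := fun e => by simp only [s]; split_ifs <;> norm_num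
  let T : (symR G σ × symR G σ) →ₗ[ℝ] (G.edgeFinset → ℝ) :=
    { toFun := fun x e => (x.1 : EuclideanSpace ℝ (Sym2 V)) e.1 +
        s e.1 * (x.2 : EuclideanSpace ℝ (Sym2 V)) e.1
      map_add' := fun x y => by ext e; simp; ring
      map_smul' := fun c x => by ext e; simp; ring }
  have hT : Function.Injective T := by
    rw [← LinearMap.ker_eq_bot, LinearMap.ker_eq_bot']
    rintro ⟨a, b⟩ h
    have key : ∀ e, (a : EuclideanSpace ℝ (Sym2 V)) e = 0 ∧ (b : EuclideanSpace ℝ (Sym2 V)) e = 0 := by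
      intro e
      by_cases he : e ∈ G.edgeSet
      · have h1 := congrFun h ⟨e, by simpa using he⟩
        have h2 := congrFun h ⟨Sym2.map σ e, by
          simpa using (map_mem_edgeSet G σ hσadj e).2 he⟩
        simp only [T, LinearMap.coe_mk, AddHom.coe_mk, Pi.zero_apply, a.2.1 e, b.2.1 e, hs e he] at h1 h2
        have ha : (a : EuclideanSpace ℝ (Sym2 V)) e = 0 := by linarith
        refine ⟨ha, ?_⟩
        rw [ha, zero_add] at h1
        exact (mul_eq_zero.1 h1).resolve_left (hs0 e)
      · exact ⟨a.2.2 e he, b.2.2 e he⟩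
    ext e
    · simpa using (key e).1
    · simpa using (key e).2
  have := LinearMap.finrank_le_finrank_of_injective hT
  rw [Module.finrank_prod, Module.finrank_pi, Fintype.card_coe] at this
  omega

theorem rig_surj {V : Type*} [Fintype V] [DecidableEq V]
    (G : SimpleGraph V) [DecidableRel G.Adj]
    (C : Euc 4 ≃ₗᵢ[ℝ] Euc 4) (hC2 : ∀ v, C (C v) = v)
    (σ : Equiv.Perm V) (hσ : ∀ i, σ (σ i) = i)
    (hσadj : ∀ i j : V, G.Adj (σ i) (σ j) ↔ G.Adj i j)
    (p : V → Euc 4) (hsym : p ∈ symU C σ)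
    (hnostress : ∀ ω : Sym2 V → ℝ,
      (∀ i : V, ∑ j ∈ G.neighborFinset i, ω s(i, j) • (p i - p j) = 0) →
      (∀ e ∈ G.edgeSet, ω (Sym2.map σ e) = ω e) →
      ∀ e ∈ G.edgeSet, ω e = 0) :
    LinearMap.range (rigB G C σ hσadj ⟨p, hsym⟩) = ⊤ := by
  rw [← Submodule.orthogonal_eq_bot_iff, Submodule.eq_bot_iff]
  intro ω hω
  rw [Submodule.mem_orthogonal] at hω
  have hmm : ∀ e : Sym2 V, Sym2.map σ (Sym2.map σ e) = e := fun e => by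
    induction e with | _ i j => simp [hσ]
  set ω' : Sym2 V → ℝ := fun e => (ω : EuclideanSpace ℝ (Sym2 V)) e with hω'
  have hω1 : ∀ e, ω' (Sym2.map σ e) = ω' e := ω.2.1
  have hω2 : ∀ e, e ∉ G.edgeSet → ω' e = 0 := ω.2.2
  have h1 : ∀ u ∈ symU C σ, ∑ e, ω' e * edgeForm p u e = 0 := by
    intro u hu
    have := hω _ (LinearMap.mem_range_self _ ⟨u, hu⟩)
    rw [Submodule.coe_inner, PiLp.inner_apply] at this
    rw [← this]
    refine Finset.sum_congr rfl fun e _ => ?_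
    rw [rigB_apply]
    by_cases he : e ∈ G.edgeSet
    · simp [he, hω']
    · simp [he, hω2]
  have h2 : ∀ w : V → Euc 4, ∑ e, ω' e * edgeForm p w e = 0 := by
    intro w
    let τ : V → Euc 4 := fun i => C (w (σ i))
    have hτ : w + τ ∈ symU C σ := fun i => by simp [τ, hσ, hC2, add_comm]
    have h3 := h1 _ hτ
    have h4 : ∑ e, ω' e * edgeForm p τ e = ∑ e, ω' e * edgeForm p w e := by
      refine Fintype.sum_equiv ⟨Sym2.map σ, Sym2.map σ, hmm, hmm⟩ _ _ fun e => ?_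
      simp only [Equiv.coe_fn_mk]
      rw [hω1, edgeForm_map C σ p τ p w hsym (fun i => by simp [τ, hC2])]
    simp only [edgeForm_add, mul_add, Finset.sum_add_distrib, h4] at h3
    linarith
  have h5 : ∀ i : V, ∑ j ∈ G.neighborFinset i, ω' s(i, j) • (p i - p j) = 0 := by
    intro i
    refine ext_inner_right ℝ fun x => ?_
    rw [inner_zero_left, ← h2 (Pi.single i x), sum_inner]
    have hinj : Set.InjOn (fun j => s(i, j)) (G.neighborFinset i : Set V) := by
      intro a _ b _ hab
      exact Sym2.congr_right.1 hab
    have hsub : ∑ e ∈ (G.neighborFinset i).image (fun j => s(i, j)), ω' e * edgeForm p (Pi.single i x) e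
        = ∑ e, ω' e * edgeForm p (Pi.single i x) e := by
      refine Finset.sum_subset (Finset.subset_univ _) fun e _ he => ?_
      by_cases hE : e ∈ G.edgeSet
      · rw [mul_eq_zero]; right
        induction e with
        | _ a b =>
          have ha : a ≠ i := by
            rintro rfl
            exact he (Finset.mem_image.2 ⟨b, by simpa using hE, rfl⟩)
          have hb : b ≠ i := by
            rintro rfl
            exact he (Finset.mem_image.2 ⟨a, by simpa using hE.symm, Sym2.eq_swap⟩)
          simp [ha, hb]
      · simp [hω2 e hE]
    rw [← hsub, Finset.sum_image hinj]
    refine Finset.sum_congr rfl fun j hj => ?_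
    have hji : j ≠ i := by
      rintro rfl
      simp at hj
    simp [hji, real_inner_smul_left]
  have h6 := hnostress ω' h5 (fun e _ => hω1 e)
  ext e
  by_cases hE : e ∈ G.edgeSet
  · exact h6 e hE
  · exact hω2 e hE

theorem skew2 (W : Submodule ℝ (Euc 4)) (e : OrthonormalBasis (Fin 2) ℝ W)
    (A : Euc 4 →ₗ[ℝ] Euc 4) (hA : ∀ x y, inner ℝ (A x) y = - inner ℝ x (A y))
    (hW : ∀ x ∈ W, A x ∈ W) (h : inner ℝ (A (e 0)) (e 1 : Euc 4) = 0) : ∀ x ∈ W, A x = 0 := by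
  have hz : ∀ x ∈ W, inner ℝ (e 0 : Euc 4) x = 0 → inner ℝ (e 1 : Euc 4) x = 0 → x = 0 := by
    intro x hx h0 h1
    have := e.sum_repr' ⟨x, hx⟩
    rw [Fin.sum_univ_two, Submodule.coe_inner, Submodule.coe_inner] at this
    simp only [h0, h1, zero_smul, add_zero] at this
    exact (congrArg Subtype.val this).symm
  have hs : ∀ x, inner ℝ x (A x) = 0 := fun x => by
    have := hA x x
    rw [real_inner_comm] at this
    linarith
  have e0 : A (e 0) = 0 := hz _ (hW _ (e 0).2) (hs _) (by rw [real_inner_comm]; exact h)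
  have e1 : A (e 1) = 0 := hz _ (hW _ (e 1).2)
    (by have := hA (e 0) (e 1); rw [e0, inner_zero_left] at this; linarith) (hs _)
  intro x hx
  have := congrArg Subtype.val (e.sum_repr' ⟨x, hx⟩)
  rw [Fin.sum_univ_two] at this
  simp only [Submodule.coe_add, Submodule.coe_smul] at this
  rw [← this, map_add, map_smul, map_smul, e0, e1]
  simp

/-- Symmetric infinitesimal isometries. -/
def symT (C : Euc 4 ≃ₗᵢ[ℝ] Euc 4) : Submodule ℝ ((Euc 4 →ₗ[ℝ] Euc 4) × Euc 4) where
  carrier := {x | (∀ v w, inner ℝ (x.1 v) w = - inner ℝ v (x.1 w)) ∧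
    (∀ v, x.1 (C v) = C (x.1 v)) ∧ C x.2 = x.2}
  add_mem' := fun {a b} ha hb => ⟨fun v w => by
      simp [inner_add_left, inner_add_right, ha.1 v w, hb.1 v w]; ring,
    fun v => by simp [ha.2.1 v, hb.2.1 v], by simp [ha.2.2, hb.2.2]⟩
  zero_mem' := ⟨fun v w => by simp, fun v => by simp, by simp⟩
  smul_mem' := fun c a ha => ⟨fun v w => by
      simp [real_inner_smul_left, real_inner_smul_right, ha.1 v w],
    fun v => by simp [ha.2.1 v], by simp [ha.2.2]⟩

theorem finrank_symT (C : Euc 4 ≃ₗᵢ[ℝ] Euc 4)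
    (hhalf : Module.finrank ℝ (fixedSpace C) = 2) : Module.finrank ℝ (symT C) ≤ 4 := by
  have hF : ∀ x, x ∈ fixedSpace C ↔ C x = x := fun x => by
    simp [fixedSpace, LinearMap.mem_ker, sub_eq_zero]
  have hdim : Module.finrank ℝ (fixedSpace C)ᗮ = 2 := by
    have := (fixedSpace C).finrank_add_finrank_orthogonal
    simp at this
    omega
  let e : OrthonormalBasis (Fin 2) ℝ (fixedSpace C) :=
    (stdOrthonormalBasis ℝ (fixedSpace C)).reindex (finCongr hhalf)
  let e' : OrthonormalBasis (Fin 2) ℝ (fixedSpace C)ᗮ :=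
    (stdOrthonormalBasis ℝ (fixedSpace C)ᗮ).reindex (finCongr hdim)
  let T : symT C →ₗ[ℝ] (fixedSpace C × ℝ × ℝ) :=
    { toFun := fun x => (⟨x.1.2, (hF _).2 x.2.2.2⟩,
        inner ℝ (x.1.1 (e 0)) (e 1 : Euc 4), inner ℝ (x.1.1 (e' 0)) (e' 1 : Euc 4))
      map_add' := fun x y => by
        simp [inner_add_left]
      map_smul' := fun c x => by
        simp [real_inner_smul_left] }
  have hT : Function.Injective T := by
    rw [← LinearMap.ker_eq_bot, LinearMap.ker_eq_bot']
    rintro ⟨⟨A, b⟩, hA, hc, hb⟩ h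
    simp only [T, LinearMap.coe_mk, AddHom.coe_mk, Prod.mk_eq_zero] at h
    obtain ⟨h1, h2, h3⟩ := h
    have hb0 : b = 0 := congrArg Subtype.val h1
    have hAF : ∀ x ∈ fixedSpace C, A x ∈ fixedSpace C := fun x hx => by
      rw [hF] at hx ⊢
      have := hc x
      simp only at this
      rw [← this, hx]
    have hAF' : ∀ x ∈ (fixedSpace C)ᗮ, A x ∈ (fixedSpace C)ᗮ := fun x hx => by
      rw [Submodule.mem_orthogonal'] at hx ⊢
      intro y hy
      rw [hA, hx _ (hAF y hy), neg_zero]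
    have k1 := skew2 _ e A hA hAF h2
    have k2 := skew2 _ e' A hA hAF' h3
    have hA0 : A = 0 := by
      ext1 x
      obtain ⟨y, hy, z, hz, rfl⟩ := (fixedSpace C).exists_add_mem_mem_orthogonal x
      simp [k1 y hy, k2 z hz]
    simp [hA0, hb0]
  have := LinearMap.finrank_le_finrank_of_injective hT
  simp [hhalf] at this
  omega

theorem exists_triv {V : Type*} [Fintype V] (C : Euc 4 ≃ₗᵢ[ℝ] Euc 4)
    (σ : Equiv.Perm V) (i0 : V)
    (p : V → Euc 4) (hsym : p ∈ symU C σ) (hspan : affineSpan ℝ (Set.range p) = ⊤)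
    (u : V → Euc 4) (hu : u ∈ symU C σ)
    (h0 : ∀ k l, inner ℝ (p k - p l) (u k - u l) = 0) :
    ∃ x ∈ symT C, ∀ i, u i = x.1 (p i) + x.2 := by
  let q : V → Euc 4 := fun i => p i - p i0
  let w : V → Euc 4 := fun i => u i - u i0
  have hqw : ∀ k l, inner ℝ (w k) (q l) = - inner ℝ (q k) (w l) := by
    intro k l
    have a1 := h0 k l
    have a2 := h0 k i0
    have a3 := h0 l i0
    have e1 : p k - p l = q k - q l := by simp [q]
    have e2 : u k - u l = w k - w l := by simp [w]
    change inner ℝ (q k) (w k) = 0 at a2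
    change inner ℝ (q l) (w l) = 0 at a3
    rw [e1, e2, inner_sub_left, inner_sub_right (q k), inner_sub_right (q l), a2, a3,
      real_inner_comm (w k) (q l)] at a1
    linarith
  let L := Finsupp.linearCombination ℝ q
  let M := Finsupp.linearCombination ℝ w
  have hL : LinearMap.range L = ⊤ := by
    rw [Finsupp.range_linearCombination]
    have := AffineSubspace.vectorSpan_eq_top_of_affineSpan_eq_top ℝ _ _ hspan
    rw [vectorSpan_range_eq_span_range_vsub_right ℝ p i0] at this
    exact this
  have hLs : Function.Surjective L := LinearMap.range_eq_top.1 hL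
  have H1 : ∀ c l, inner ℝ (M c) (q l) = - inner ℝ (L c) (w l) := by
    intro c l
    induction c using Finsupp.induction_linear with
    | zero => simp
    | add f g hf hg => simp [inner_add_left, hf, hg]; ring
    | single a b => simp [M, L, real_inner_smul_left, hqw]
  have H2 : ∀ c d, inner ℝ (M c) (L d) = - inner ℝ (L c) (M d) := by
    intro c d
    induction d using Finsupp.induction_linear with
    | zero => simp
    | add f g hf hg => simp [inner_add_right, hf, hg]; ring
    | single a b =>
      have := H1 c a
      simp only [L, M, Finsupp.linearCombination_single, real_inner_smul_right] at this ⊢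
      rw [this]; ring
  obtain ⟨g, hg⟩ := L.exists_rightInverse_of_surjective hL
  have hg' : ∀ x, L (g x) = x := fun x => LinearMap.congr_fun hg x
  let A := M ∘ₗ g
  have hA : ∀ c, A (L c) = M c := by
    intro c
    have h1 : L (g (L c) - c) = 0 := by rw [map_sub, hg', sub_self]
    have h2 : M (g (L c) - c) = 0 := by
      refine ext_inner_right ℝ fun x => ?_
      obtain ⟨d, rfl⟩ := hLs x
      rw [H2, h1]; simp
    rw [map_sub, sub_eq_zero] at h2
    exact h2
  have hAq : ∀ i, A (q i) = w i := fun i => by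
    have := hA (Finsupp.single i 1)
    simpa [L, M] using this
  have hAp : ∀ i j, A (p i) - A (p j) = u i - u j := fun i j => by
    have e1 : p i - p j = q i - q j := by simp [q]
    rw [← map_sub, e1, map_sub, hAq, hAq]; simp [w]
  have hAC : ∀ v, A (C v) = C (A v) := by
    intro v
    obtain ⟨c, rfl⟩ := hLs v
    induction c using Finsupp.induction_linear with
    | zero => simp
    | add f g hf hg => simp only [map_add, hf, hg]
    | single a b =>
      simp only [L, Finsupp.linearCombination_single, map_smul]
      congr 1
      rw [hAq]
      simp only [q, w, map_sub, hsym _, hu _, hAp]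
  refine ⟨(A, u i0 - A (p i0)), ⟨?_, hAC, ?_⟩, ?_⟩
  · intro v x
    obtain ⟨c, rfl⟩ := hLs v
    obtain ⟨d, rfl⟩ := hLs x
    simp only [hA, H2]
  · have := hAp (σ i0) i0
    simp only [map_sub, hu i0, ← hAC, hsym i0]
    have h3 : u (σ i0) = A (p (σ i0)) - A (p i0) + u i0 := by rw [this]; abel
    rw [h3]; abel
  · intro i
    have := hAp i i0
    have h3 : u i = A (p i) - A (p i0) + u i0 := by rw [this]; abel
    simp only
    rw [h3]; abel


/-- Theorem 6.8(i), half-turn symmetry in dimension 4: `C ∈ O(4)`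
a half-turn (orthogonal involution with 2-dimensional fixed subspace),
`S = {I, C}`, `Φ(C) = σ` fixes no edge setwise (`b_C = 0`),
`|E| = 4|V| - 10`; then a symmetric framework spanning `ℝ⁴` with no nonzero
fully symmetric self-stress has a symmetry-preserving finite flex. -/
theorem stmt_8 {V : Type*} [Fintype V] [DecidableEq V]
    (G : SimpleGraph V) [DecidableRel G.Adj]
    (hcount : G.edgeFinset.card + 10 = 4 * Fintype.card V)
    (C : Euc 4 ≃ₗᵢ[ℝ] Euc 4) (hC2 : ∀ v, C (C v) = v)
    (hhalf : Module.finrank ℝ (fixedSpace C) = 2)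
    (σ : Equiv.Perm V) (hσ2 : σ * σ = 1)
    (hσadj : ∀ i j : V, G.Adj (σ i) (σ j) ↔ G.Adj i j)
    (hnofixe : ∀ e ∈ G.edgeSet, Sym2.map σ e ≠ e)
    (p : V → Euc 4) (hp : Function.Injective p)
    (hsym : ∀ i, C (p i) = p (σ i))
    (hspan : affineSpan ℝ (Set.range p) = ⊤)
    (hnostress : ∀ ω : Sym2 V → ℝ,
      (∀ i : V, ∑ j ∈ G.neighborFinset i, ω s(i, j) • (p i - p j) = 0) →
      (∀ e ∈ G.edgeSet, ω (Sym2.map σ e) = ω e) →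
      ∀ e ∈ G.edgeSet, ω e = 0) :
    ∃ P : ℝ → V → Euc 4,
      ContinuousOn P (Set.Icc 0 1) ∧
      P 0 = p ∧
      (∀ t ∈ Set.Icc (0:ℝ) 1, ∀ i j : V, G.Adj i j → ‖P t i - P t j‖ = ‖p i - p j‖) ∧
      (∃ k l : V, ∀ t ∈ Set.Ioc (0:ℝ) 1, ‖P t k - P t l‖ ≠ ‖p k - p l‖) ∧
      (∀ t ∈ Set.Icc (0:ℝ) 1, ∀ i, C (P t i) = P t (σ i)) := by
  classical
  have hσ : ∀ i, σ (σ i) = i := fun i => by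
    have := congrArg (fun τ : Equiv.Perm V => τ i) hσ2
    simpa using this
  have hpU : p ∈ symU C σ := hsym
  let pU : symU C σ := ⟨p, hpU⟩
  let B := rigB G C σ hσadj
  have hsurj : LinearMap.range (B pU) = ⊤ :=
    rig_surj G C hC2 σ hσ hσadj p hpU hnostress
  have hV : 0 < Fintype.card V := by omega
  obtain ⟨i0⟩ : Nonempty V := Fintype.card_pos_iff.1 hV
  -- dimension count
  have hK : 5 ≤ Module.finrank ℝ (LinearMap.ker (B pU)) := by
    have h1 := LinearMap.finrank_range_add_finrank_ker (B pU)
    rw [hsurj, finrank_top] at h1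
    have h2 := finrank_symU C hC2 hhalf σ hσ
    have h3 := finrank_symR G σ hσ hσadj hnofixe
    omega
  have hex : ∃ u : symU C σ, B pU u = 0 ∧ ∃ k l,
      inner ℝ (p k - p l) ((u : V → Euc 4) k - (u : V → Euc 4) l) ≠ 0 := by
    by_contra hcon
    push Not at hcon
    let Ψ : ((Euc 4 →ₗ[ℝ] Euc 4) × Euc 4) →ₗ[ℝ] (V → Euc 4) :=
      { toFun := fun x i => x.1 (p i) + x.2
        map_add' := fun x y => by ext1 i; simp; abel
        map_smul' := fun c x => by ext1 i; simp }
    have hle : (LinearMap.ker (B pU)).map (symU C σ).subtype ≤ (symT C).map Ψ := by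
      rintro _ ⟨u, hu, rfl⟩
      obtain ⟨x, hx, hxu⟩ := exists_triv C σ i0 p hpU hspan u u.2 (hcon u hu)
      exact ⟨x, hx, funext fun i => (hxu i).symm⟩
    have h1 := Submodule.finrank_mono hle
    rw [Submodule.finrank_map_subtype_eq] at h1
    have h2 := Submodule.finrank_map_le Ψ (symT C)
    have h3 := finrank_symT C hhalf
    omega
  obtain ⟨u, hu, k, l, hkl⟩ := hex
  -- the implicit function theorem
  let Bc := B.toContinuousBilinearMap
  have hBc : ∀ x y, Bc x y = B x y := fun x y => rfl
  have hBsymm : ∀ x y, B x y = B y x := fun x y => by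
    ext e
    rw [rigB_apply, rigB_apply, edgeForm_comm]
  let f : symU C σ → symR G σ := fun q => B q q
  let f' : symU C σ →L[ℝ] symR G σ := (2:ℝ) • Bc pU
  have hf : HasStrictFDerivAt f f' pU := by
    have h1 := Bc.isBoundedBilinearMap.hasStrictFDerivAt (pU, pU)
    have h2 : HasStrictFDerivAt (fun q : symU C σ => (q, q))
      ((ContinuousLinearMap.id ℝ (symU C σ)).prod (ContinuousLinearMap.id ℝ (symU C σ))) pU :=
      (hasStrictFDerivAt_id pU).prodMk (hasStrictFDerivAt_id pU)
    have h3 := HasStrictFDerivAt.comp (g := fun x : symU C σ × symU C σ => Bc x.1 x.2) (f := fun q => (q, q)) pU h1 h2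
    refine h3.congr_fderiv ?_
    ext1 x
    simp [f', hBc, hBsymm x pU, two_smul]
  have hf' : f'.range = ⊤ := by
    rw [LinearMap.range_eq_top] at hsurj ⊢
    intro y
    obtain ⟨x, hx⟩ := hsurj ((1/2 : ℝ) • y)
    refine ⟨x, ?_⟩
    simp [f', hBc, hx]
  obtain ⟨γ, hγ0, hγd, δ, hδ, hγc, hγf⟩ := exists_curve f f' pU hf hf' u (by simp [f', hBc, hu])
  let ev : V → symU C σ →L[ℝ] Euc 4 := fun i =>
    (ContinuousLinearMap.proj i).comp (symU C σ).subtypeL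
  have hev : ∀ i (x : symU C σ), ev i x = (x : V → Euc 4) i := fun i x => rfl
  have hd : HasDerivAt (fun t => ev k (γ t) - ev l (γ t)) (ev k u - ev l u) 0 :=
    ((ev k).hasFDerivAt.comp_hasDerivAt (0:ℝ) hγd).sub ((ev l).hasFDerivAt.comp_hasDerivAt (0:ℝ) hγd)
  have hd2 := hd.norm_sq
  have hne := hd2.eventually_ne (c := ‖p k - p l‖ ^ 2) (by
    rw [hγ0]
    simpa [hev, pU] using hkl)
  rw [eventually_nhdsWithin_iff, Metric.eventually_nhds_iff] at hne
  obtain ⟨ε, hε, hb⟩ := hne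
  let m := min δ (ε / 2)
  have hm : 0 < m := by positivity
  have hmδ : m ≤ δ := min_le_left _ _
  have hmε : m ≤ ε / 2 := min_le_right _ _
  have hmap : ∀ t ∈ Set.Icc (0:ℝ) 1, t * m ∈ Set.Icc (0:ℝ) δ := fun t ht =>
    ⟨mul_nonneg ht.1 hm.le, (mul_le_of_le_one_left hm.le ht.2).trans hmδ⟩
  refine ⟨fun t => (γ (t * m) : V → Euc 4), ?_, ?_, ?_, ⟨k, l, ?_⟩, ?_⟩
  · refine continuous_subtype_val.comp_continuousOn (hγc.comp ?_ hmap)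
    fun_prop
  · simp [hγ0, pU]
  · intro t ht i j hij
    have h1 := congrArg (fun r : symR G σ => (r : EuclideanSpace ℝ (Sym2 V)) s(i, j))
      (hγf _ (hmap t ht))
    simp only [f, B, rigB_apply, SimpleGraph.mem_edgeSet, hij, if_true, edgeForm_mk,
      real_inner_self_eq_norm_sq] at h1
    exact (sq_eq_sq₀ (norm_nonneg _) (norm_nonneg _)).1 h1
  · intro t ht heq
    have hpos : 0 < t * m := mul_pos ht.1 hm
    have h2 : t * m ≤ m := mul_le_of_le_one_left hm.le ht.2
    refine hb (y := t * m) ?_ hpos.ne' ?_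
    · rw [Real.dist_eq, sub_zero, abs_of_pos hpos]; linarith
    · simp only [hev]; rw [heq]
  · intro t ht i
    exact (γ (t * m)).2 i
end
end
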